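/- Lower semicontinuity of perimeter in 1-quasiopen sets: Let U ⊂ X be a 1-quasiopen set and let E, E_i ⊂ X (i ∈ ℕ) be μ-measurable sets with P(E,U) < ∞ and P(E_i,U) < ∞ for every i, and suppose that χ_{E_i} → χ_E in L^1_loc(U). Then P(E,U) ≤ liminf_{i→∞} P(E_i,U). -/

import Mathlib

open MeasureTheory Filter Metric Set
open scoped Topology ENNReal NNReal symmDiff

noncomputable section

namespace PaperBV

/-- A rectifiable curve parametrized by arc-length: a `1`-Lipschitz map on `[0, len]`. -/
structure Curve (X : Type*) [MetricSpace X] where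
  len : ℝ
  len_nonneg : 0 ≤ len
  toFun : ℝ → X
  lip : LipschitzOnWith 1 toFun (Set.Icc 0 len)

variable {X : Type*} [MetricSpace X] [MeasurableSpace X] [BorelSpace X]

/-- The curve lies in the set `A`. -/
def Curve.In (γ : Curve X) (A : Set X) : Prop :=
  ∀ t ∈ Set.Icc (0 : ℝ) γ.len, γ.toFun t ∈ A

/-- The curve integral `∫_γ g ds` of a nonnegative function, for an
arc-length parametrized curve. -/
def Curve.integral (γ : Curve X) (g : X → ℝ≥0∞) : ℝ≥0∞ :=
  ∫⁻ t in Set.Icc (0 : ℝ) γ.len, g (γ.toFun t)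

/-- The upper gradient inequality `|u(x) - u(y)| ≤ ∫_γ g ds` along the curve `γ`,
where `x, y` are the endpoints of `γ`. -/
def UGIneq (u : X → ℝ) (g : X → ℝ≥0∞) (γ : Curve X) : Prop :=
  ENNReal.ofReal |u (γ.toFun 0) - u (γ.toFun γ.len)| ≤ γ.integral g

/-- `g` is an upper gradient of `u` on `X`: `g` is nonnegative (automatic in `ℝ≥0∞`),
Borel, and the upper gradient inequality holds along every curve. -/
def IsUpperGradient (u : X → ℝ) (g : X → ℝ≥0∞) : Prop :=
  Measurable g ∧ ∀ γ : Curve X, UGIneq u g γ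

/-- A family of curves has zero `1`-modulus: there is a nonnegative Borel function
`ρ ∈ L¹(X)` whose curve integral is infinite along every curve of the family. -/
def ZeroMod (μ : Measure X) (Γ : Set (Curve X)) : Prop :=
  ∃ ρ : X → ℝ≥0∞, Measurable ρ ∧ (∫⁻ x, ρ x ∂μ) < ∞ ∧ ∀ γ ∈ Γ, γ.integral ρ = ∞

/-- `g` is a `1`-weak upper gradient of `u` in `A`: `g` is nonnegative, `μ`-measurable,
and the upper gradient inequality holds along `1`-a.e. curve in `A`. -/
def IsWeakUpperGradientOn (μ : Measure X) (u : X → ℝ) (g : X → ℝ≥0∞) (A : Set X) : Prop :=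
  AEMeasurable g μ ∧ ZeroMod μ {γ : Curve X | γ.In A ∧ ¬ UGIneq u g γ}

/-- A nonnegative function `g` belongs to `L¹_loc(A)`. -/
def LIntegrableLocOn (μ : Measure X) (g : X → ℝ≥0∞) (A : Set X) : Prop :=
  ∀ x ∈ A, ∃ r > (0 : ℝ), (∫⁻ y in A ∩ Metric.ball x r, g y ∂μ) < ∞

/-- `g` is the minimal `1`-weak upper gradient of `u` in `A`: a `1`-weak upper gradient
satisfying `g ≤ g'` `μ`-a.e. in `A` for every `1`-weak upper gradient `g' ∈ L¹_loc(A)`. -/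
def IsMinimalWUG (μ : Measure X) (u : X → ℝ) (g : X → ℝ≥0∞) (A : Set X) : Prop :=
  IsWeakUpperGradientOn μ u g A ∧
    ∀ g' : X → ℝ≥0∞, IsWeakUpperGradientOn μ u g' A → LIntegrableLocOn μ g' A →
      ∀ᵐ x ∂(μ.restrict A), g x ≤ g' x

/-- The Newtonian norm `‖u‖_{N^{1,1}(A)}` (valued in `ℝ≥0∞`). -/
def NNorm (μ : Measure X) (A : Set X) (u : X → ℝ) : ℝ≥0∞ :=
  (∫⁻ x in A, ENNReal.ofReal |u x| ∂μ) +
    ⨅ (g : X → ℝ≥0∞) (_ : IsWeakUpperGradientOn μ u g A), ∫⁻ x in A, g x ∂μ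

/-- `u ∈ N^{1,1}(A)`. -/
def MemN11 (μ : Measure X) (A : Set X) (u : X → ℝ) : Prop :=
  NNorm μ A u < ∞

/-- `u ∈ N^{1,1}_loc(A)`: every point of `A` has a ball `B` with `u ∈ N^{1,1}(A ∩ B)`. -/
def MemN11Loc (μ : Measure X) (A : Set X) (u : X → ℝ) : Prop :=
  ∀ x ∈ A, ∃ r > (0 : ℝ), NNorm μ (A ∩ Metric.ball x r) u < ∞

/-- `u ∈ N^{1,1}(Ω')` for every bounded open `Ω' ⊆ X`. -/
def MemN11LocBounded (μ : Measure X) (u : X → ℝ) : Prop :=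
  ∀ Ω' : Set X, IsOpen Ω' → Bornology.IsBounded Ω' → NNorm μ Ω' u < ∞

/-- `u ∈ N^{1,1}_0(Ω)`: `u ∈ N^{1,1}(X)` and `u = 0` outside `Ω`. -/
def MemN110 (μ : Measure X) (Ω : Set X) (u : X → ℝ) : Prop :=
  MemN11 μ Set.univ u ∧ ∀ x ∉ Ω, u x = 0

/-- The `1`-capacity `capa₁(A) = inf {‖u‖_{N^{1,1}(X)} : u ∈ N^{1,1}(X), u ≥ 1 on A}`. -/
def capa1 (μ : Measure X) (A : Set X) : ℝ≥0∞ :=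
  ⨅ (u : X → ℝ) (_ : MemN11 μ Set.univ u) (_ : ∀ x ∈ A, 1 ≤ u x), NNorm μ Set.univ u

/-- `U` is `1`-quasiopen: for every `ε > 0` there is an open `G` with `capa₁(G) < ε`
such that `U ∪ G` is open. -/
def QuasiOpen (μ : Measure X) (U : Set X) : Prop :=
  ∀ ε : ℝ, 0 < ε → ∃ G : Set X, IsOpen G ∧ capa1 μ G < ENNReal.ofReal ε ∧ IsOpen (U ∪ G)

/-- `u ∈ L¹_loc(A)`. -/
def MemL1Loc (μ : Measure X) (A : Set X) (u : X → ℝ) : Prop :=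
  AEMeasurable u (μ.restrict A) ∧
    ∀ x ∈ A, ∃ r > (0 : ℝ), (∫⁻ y in A ∩ Metric.ball x r, ENNReal.ofReal |u y| ∂μ) < ∞

/-- `v i → u` in `L¹_loc(A)`: every `x ∈ A` has a ball `B` with `v i → u` in `L¹(A ∩ B)`. -/
def L1LocConv (μ : Measure X) (A : Set X) (v : ℕ → X → ℝ) (u : X → ℝ) : Prop :=
  ∀ x ∈ A, ∃ r > (0 : ℝ),
    Filter.Tendsto (fun i => ∫⁻ y in A ∩ Metric.ball x r, ENNReal.ofReal |v i y - u y| ∂μ)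
      Filter.atTop (𝓝 0)

/-- `u` is locally Lipschitz on `Ω`. -/
def LocLipOn (u : X → ℝ) (Ω : Set X) : Prop :=
  ∀ x ∈ Ω, ∃ r > (0 : ℝ), ∃ K : ℝ≥0, LipschitzOnWith K u (Ω ∩ Metric.ball x r)

/-- The total variation `‖Du‖(Ω)` of `u` in an open set `Ω`: the infimum of
`liminf_i ∫_Ω g_{v i} dμ` over sequences of locally Lipschitz functions `v i → u`
in `L¹_loc(Ω)`, where `g_{v i}` is the minimal `1`-weak upper gradient of `v i` in `Ω`. -/
def tvOpen (μ : Measure X) (Ω : Set X) (u : X → ℝ) : ℝ≥0∞ :=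
  ⨅ (v : ℕ → X → ℝ) (g : ℕ → X → ℝ≥0∞) (_ : ∀ i, LocLipOn (v i) Ω)
    (_ : ∀ i, IsMinimalWUG μ (v i) (g i) Ω) (_ : L1LocConv μ Ω v u),
    Filter.liminf (fun i => ∫⁻ x in Ω, g i x ∂μ) Filter.atTop

/-- The total variation `‖Du‖(A)` of `u` in an arbitrary set `A`:
`inf {‖Du‖(Ω) : Ω ⊇ A open}`. -/
def tv (μ : Measure X) (A : Set X) (u : X → ℝ) : ℝ≥0∞ :=
  ⨅ (Ω : Set X) (_ : IsOpen Ω) (_ : A ⊆ Ω), tvOpen μ Ω u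

/-- The perimeter `P(E, A) = ‖Dχ_E‖(A)` for arbitrary `A`. -/
def perim (μ : Measure X) (E A : Set X) : ℝ≥0∞ :=
  tv μ A (Set.indicator E (fun _ => (1 : ℝ)))

/-- The perimeter `P(E, Ω) = ‖Dχ_E‖(Ω)` for open `Ω`. -/
def perimOpen (μ : Measure X) (E Ω : Set X) : ℝ≥0∞ :=
  tvOpen μ Ω (Set.indicator E (fun _ => (1 : ℝ)))

/-- The measure `μ` is doubling with constant `Cd`. -/
def Doubling (μ : Measure X) (Cd : ℝ) : Prop :=
  1 ≤ Cd ∧ ∀ (x : X) (r : ℝ), 0 < r →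
    0 < μ (Metric.ball x (2 * r)) ∧
      μ (Metric.ball x (2 * r)) ≤ ENNReal.ofReal Cd * μ (Metric.ball x r) ∧
      μ (Metric.ball x r) < ∞

/-- The space supports a `(1,1)`-Poincaré inequality with constants `CP, lam`. -/
def Poincare (μ : Measure X) (CP lam : ℝ) : Prop :=
  1 ≤ CP ∧ 1 ≤ lam ∧ ∀ (x : X) (r : ℝ), 0 < r → ∀ (u : X → ℝ) (g : X → ℝ≥0∞),
    MemL1Loc μ Set.univ u → IsUpperGradient u g →
      ENNReal.ofReal (⨍ y in Metric.ball x r, |u y - ⨍ z in Metric.ball x r, u z ∂μ| ∂μ)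
        ≤ ENNReal.ofReal (CP * r) *
            ((∫⁻ y in Metric.ball x (lam * r), g y ∂μ) / μ (Metric.ball x (lam * r)))

/-- The restricted spherical Hausdorff content of codimension one. -/
def HR (μ : Measure X) (R : ℝ) (A : Set X) : ℝ≥0∞ :=
  ⨅ (c : ℕ → X) (r : ℕ → ℝ) (_ : ∀ i, 0 < r i ∧ r i ≤ R)
    (_ : A ⊆ ⋃ i, Metric.ball (c i) (r i)),
    ∑' i, μ (Metric.ball (c i) (r i)) / ENNReal.ofReal (r i)

/-- The codimension-one Hausdorff measure `H(A) = lim_{R → 0} H_R(A)`. -/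
def Hcodim (μ : Measure X) (A : Set X) : ℝ≥0∞ :=
  ⨆ (R : ℝ) (_ : 0 < R), HR μ R A

/-- The lower approximate limit `u^∧`. -/
def lowerApprox (μ : Measure X) (u : X → ℝ) (x : X) : EReal :=
  sSup ((fun t : ℝ => (t : EReal)) ''
    {t : ℝ | Filter.Tendsto
      (fun r => μ (Metric.ball x r ∩ {y | u y < t}) / μ (Metric.ball x r))
      (𝓝[>] (0 : ℝ)) (𝓝 0)})

/-- The upper approximate limit `u^∨`. -/
def upperApprox (μ : Measure X) (u : X → ℝ) (x : X) : EReal :=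
  sInf ((fun t : ℝ => (t : EReal)) ''
    {t : ℝ | Filter.Tendsto
      (fun r => μ (Metric.ball x r ∩ {y | t < u y}) / μ (Metric.ball x r))
      (𝓝[>] (0 : ℝ)) (𝓝 0)})

/-- `u ∈ BV_loc(X)`: `u ∈ L¹_loc(X)` with `‖Du‖(Ω') < ∞` for every bounded open `Ω'`. -/
def MemBVLoc (μ : Measure X) (u : X → ℝ) : Prop :=
  MemL1Loc μ Set.univ u ∧
    ∀ Ω' : Set X, IsOpen Ω' → Bornology.IsBounded Ω' → tvOpen μ Ω' u < ∞

/-- The measure-theoretic interior `I_E`. -/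
def mInterior (μ : Measure X) (E : Set X) : Set X :=
  {x | Filter.Tendsto (fun r => μ (Metric.ball x r \ E) / μ (Metric.ball x r))
    (𝓝[>] (0 : ℝ)) (𝓝 0)}

/-- The measure-theoretic exterior `O_E`. -/
def mExterior (μ : Measure X) (E : Set X) : Set X :=
  {x | Filter.Tendsto (fun r => μ (Metric.ball x r ∩ E) / μ (Metric.ball x r))
    (𝓝[>] (0 : ℝ)) (𝓝 0)}

/-- The measure-theoretic boundary `∂*E`: the points where both `E` and its complement
have positive upper density. -/
def mBoundary (μ : Measure X) (E : Set X) : Set X :=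
  {x | 0 < Filter.limsup (fun r => μ (Metric.ball x r ∩ E) / μ (Metric.ball x r))
        (𝓝[>] (0 : ℝ)) ∧
       0 < Filter.limsup (fun r => μ (Metric.ball x r \ E) / μ (Metric.ball x r))
        (𝓝[>] (0 : ℝ))}


set_option linter.unusedSectionVars false
set_option linter.deprecated false
set_option linter.unusedVariables false
set_option linter.unusedSimpArgs false
/-- property holds for 1-a.e. curve -/
def AEC (μ : Measure X) (P : Curve X → Prop) : Prop :=
  ∃ ρ : X → ℝ≥0∞, Measurable ρ ∧ (∫⁻ x, ρ x ∂μ) < ∞ ∧ ∀ γ : Curve X, γ.integral ρ < ∞ → P γ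

/-- derivative form of weak upper gradient -/
def DUG (μ : Measure X) (Ω : Set X) (v : X → ℝ) (g : X → ℝ≥0∞) : Prop :=
  AEC μ (fun γ => ∀ᵐ t : ℝ, t ∈ Ioo 0 γ.len → γ.toFun t ∈ Ω → ∀ D : ℝ,
    HasDerivAt (fun s => v (γ.toFun s)) D t → ENNReal.ofReal |D| ≤ g (γ.toFun t))

lemma AEC.mono {μ : Measure X} {P Q : Curve X → Prop} (h : AEC μ P) (hPQ : ∀ γ, P γ → Q γ) :
    AEC μ Q := by
  obtain ⟨ρ, h1, h2, h3⟩ := h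
  exact ⟨ρ, h1, h2, fun γ hγ => hPQ γ (h3 γ hγ)⟩

lemma AEC.of_all {μ : Measure X} {P : Curve X → Prop} (h : ∀ γ, P γ) : AEC μ P :=
  ⟨0, measurable_zero, by simp, fun γ _ => h γ⟩

lemma AEC.all {μ : Measure X} {P : ℕ → Curve X → Prop} (h : ∀ k, AEC μ (P k)) :
    AEC μ (fun γ => ∀ k, P k γ) := by
  choose ρ h1 h2 h3 using h
  obtain ⟨δ, δpos, hδ⟩ := ENNReal.exists_pos_sum_of_countable' (one_ne_zero) ℕ
  have hδt : ∀ k, δ k ≠ ∞ := fun k => ne_top_of_lt (lt_of_le_of_lt (ENNReal.le_tsum k)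
    (hδ.trans ENNReal.one_lt_top))
  set a : ℕ → ℝ≥0∞ := fun k => δ k / (1 + ∫⁻ x, ρ k x ∂μ) with ha
  have hapos : ∀ k, a k ≠ 0 := fun k => by
    simp only [ha]
    exact (ENNReal.div_pos (δpos k).ne' (by simp [(h2 k).ne])).ne'
  have hatop : ∀ k, a k ≠ ∞ := fun k => by
    simp only [ha]
    exact ENNReal.div_ne_top (hδt k) (by simp)
  refine ⟨fun x => ∑' k, a k * ρ k x, ?_, ?_, ?_⟩
  · exact Measurable.ennreal_tsum (fun k => (h1 k).const_mul _)
  · rw [lintegral_tsum (fun k => ((h1 k).const_mul _).aemeasurable)]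
    refine lt_of_le_of_lt (ENNReal.tsum_le_tsum (fun k => ?_)) (hδ.trans ENNReal.one_lt_top)
    rw [lintegral_const_mul _ (h1 k)]
    simp only [ha]
    calc δ k / (1 + ∫⁻ x, ρ k x ∂μ) * ∫⁻ x, ρ k x ∂μ
        ≤ δ k / (1 + ∫⁻ x, ρ k x ∂μ) * (1 + ∫⁻ x, ρ k x ∂μ) := by gcongr; exact le_add_self
      _ ≤ δ k := by
        rw [ENNReal.div_mul_cancel (by simp) (by simp [(h2 k).ne])]
  · intro γ hγ k
    apply h3
    have : a k * γ.integral (ρ k) ≤ γ.integral (fun x => ∑' k, a k * ρ k x) := by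
      unfold Curve.integral
      rw [← lintegral_const_mul' _ _ (hatop k)]
      exact lintegral_mono (fun t => ENNReal.le_tsum (f := fun k => a k * ρ k (γ.toFun t)) k)
    by_contra hcon
    have htop : γ.integral (ρ k) = ∞ := by simpa using hcon
    rw [htop, ENNReal.mul_top (hapos k)] at this
    exact absurd hγ (by simpa using this)

lemma AEC.and {μ : Measure X} {P Q : Curve X → Prop} (h : AEC μ P) (h' : AEC μ Q) :
    AEC μ (fun γ => P γ ∧ Q γ) := by
  obtain ⟨ρ, h1, h2, h3⟩ := h
  obtain ⟨ρ', h1', h2', h3'⟩ := h'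
  refine ⟨fun x => ρ x + ρ' x, h1.add h1', ?_, ?_⟩
  · rw [lintegral_add_left h1]; exact ENNReal.add_lt_top.2 ⟨h2, h2'⟩
  · intro γ hγ
    exact ⟨h3 γ (lt_of_le_of_lt (lintegral_mono fun t => le_self_add) hγ),
      h3' γ (lt_of_le_of_lt (lintegral_mono fun t => le_add_self) hγ)⟩

lemma ae_of_local {S : Set ℝ} {P : ℝ → Prop}
    (h : ∀ t ∈ S, ∃ u ∈ 𝓝 t, ∀ᵐ s : ℝ, s ∈ u → s ∈ S → P s) : ∀ᵐ s : ℝ, s ∈ S → P s := by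
  rw [ae_iff]
  have : {a : ℝ | ¬(a ∈ S → P a)} = {a | a ∈ S ∧ ¬ P a} := by ext; simp
  rw [this]
  apply measure_null_of_locally_null
  rintro t ⟨htS, -⟩
  obtain ⟨u, hu, hae⟩ := h t htS
  refine ⟨u ∩ {a | a ∈ S ∧ ¬ P a}, ?_, ?_⟩
  · exact inter_mem (mem_nhdsWithin_of_mem_nhds hu) self_mem_nhdsWithin
  · rw [ae_iff] at hae
    refine measure_mono_null ?_ hae
    rintro s ⟨h1, h2, h3⟩
    simp only [mem_ofPred_eq]
    exact fun hh => h3 (hh h1 h2)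

lemma deriv_le_of_dom {φ ψ : ℝ → ℝ} {D d t : ℝ} (h1 : HasDerivAt φ D t) (h2 : HasDerivAt ψ d t)
    (h : ∀ᶠ s in 𝓝 t, |φ s - φ t| ≤ |ψ s - ψ t|) : |D| ≤ |d| := by
  rw [hasDerivAt_iff_tendsto_slope] at h1 h2
  refine le_of_tendsto_of_tendsto h1.abs h2.abs ?_
  filter_upwards [nhdsWithin_le_nhds h] with s hs
  simp only [slope, vsub_eq_sub, smul_eq_mul, abs_mul]
  gcongr

lemma Curve.cont (γ : Curve X) : ContinuousOn γ.toFun (Icc 0 γ.len) := γ.lip.continuousOn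

/-- around an interior time with value in an open set there is an interval. -/
lemma Curve.exists_interval (γ : Curve X) {O : Set X} (hO : IsOpen O) {t : ℝ}
    (ht : t ∈ Ioo 0 γ.len) (htO : γ.toFun t ∈ O) :
    ∃ p q : ℝ, 0 ≤ p ∧ p < t ∧ t < q ∧ q ≤ γ.len ∧ ∀ s ∈ Icc p q, γ.toFun s ∈ O := by
  have hc : ContinuousAt γ.toFun t := γ.cont.continuousAt (Icc_mem_nhds ht.1 ht.2)
  have h1 : γ.toFun ⁻¹' O ∩ Ioo 0 γ.len ∈ 𝓝 t :=
    inter_mem (hc (hO.mem_nhds htO)) (Ioo_mem_nhds ht.1 ht.2)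
  obtain ⟨ε, hε, hsub⟩ := Metric.mem_nhds_iff.1 h1
  have hin : ∀ s ∈ Icc (t - ε/2) (t + ε/2), s ∈ γ.toFun ⁻¹' O ∩ Ioo 0 γ.len := fun s hs => by
    apply hsub
    rw [mem_ball, Real.dist_eq, abs_lt]
    constructor <;> linarith [hs.1, hs.2]
  refine ⟨t - ε/2, t + ε/2, ?_, by linarith, by linarith, ?_, fun s hs => (hin s hs).1⟩
  · exact (hin (t - ε/2) ⟨le_rfl, by linarith⟩).2.1.le
  · exact (hin (t + ε/2) ⟨by linarith, le_rfl⟩).2.2.le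

lemma LocLipOn.comp_curve {O : Set X} {v : X → ℝ} (hv : LocLipOn v O) (γ : Curve X) {p q : ℝ}
    (hp : 0 ≤ p) (hq : q ≤ γ.len) (hin : ∀ s ∈ Icc p q, γ.toFun s ∈ O) :
    ∃ K, LipschitzOnWith K (fun s => v (γ.toFun s)) (Icc p q) := by
  apply LocallyLipschitzOn.exists_lipschitzOnWith_of_compact isCompact_Icc
  intro t ht
  obtain ⟨r, hr, K, hK⟩ := hv _ (hin t ht)
  have hsub : Icc p q ⊆ Icc 0 γ.len := Icc_subset_Icc hp hq
  have hc : ContinuousWithinAt γ.toFun (Icc p q) t := (γ.cont.mono hsub) t ht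
  refine ⟨K * 1, γ.toFun ⁻¹' (ball (γ.toFun t) r) ∩ Icc p q, ?_, ?_⟩
  · exact inter_mem (hc (ball_mem_nhds _ hr)) self_mem_nhdsWithin
  · exact hK.comp (γ.lip.mono (inter_subset_right.trans hsub))
      (fun s hs => ⟨hin s hs.2, hs.1⟩)

lemma LocLipOn.ae_diff {O : Set X} (hO : IsOpen O) {v : X → ℝ} (hv : LocLipOn v O) (γ : Curve X) :
    ∀ᵐ t : ℝ, t ∈ Ioo 0 γ.len → γ.toFun t ∈ O → DifferentiableAt ℝ (fun s => v (γ.toFun s)) t := by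
  have := ae_of_local (S := {t | t ∈ Ioo 0 γ.len ∧ γ.toFun t ∈ O})
    (P := fun t => DifferentiableAt ℝ (fun s => v (γ.toFun s)) t) ?_
  · filter_upwards [this] with t h1 h2 h3 using h1 ⟨h2, h3⟩
  · rintro t ⟨ht, htO⟩
    obtain ⟨p, q, hp, hpt, htq, hq, hin⟩ := γ.exists_interval hO ht htO
    obtain ⟨K, hK⟩ := hv.comp_curve γ hp hq hin
    have hpq : p ≤ q := by linarith
    have hac := (uIcc_of_le hpq ▸ hK :
      LipschitzOnWith K (fun s => v (γ.toFun s)) (uIcc p q)).absolutelyContinuousOnInterval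
    refine ⟨Icc p q, Icc_mem_nhds hpt htq, ?_⟩
    filter_upwards [hac.ae_differentiableAt] with s hs h1 _
    exact hs (by rwa [uIcc_of_le hpq])

/-- sub-curve -/
def Curve.sub (γ : Curve X) (p q : ℝ) (hp : 0 ≤ p) (hpq : p ≤ q) (hq : q ≤ γ.len) : Curve X where
  len := q - p
  len_nonneg := by linarith
  toFun := fun s => γ.toFun (p + s)
  lip := by
    have h1 : LipschitzOnWith 1 (fun s : ℝ => p + s) (Icc 0 (q - p)) :=
      (LipschitzWith.mk_one (fun a b => by simp)).lipschitzOnWith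
    have := γ.lip.comp h1 (fun s hs => ⟨by linarith [hs.1], by linarith [hs.2]⟩)
    rw [mul_one] at this
    exact this

lemma Curve.sub_integral (γ : Curve X) (p q : ℝ) (hp : 0 ≤ p) (hpq : p ≤ q) (hq : q ≤ γ.len)
    (f : X → ℝ≥0∞) : (γ.sub p q hp hpq hq).integral f = ∫⁻ t in Icc p q, f (γ.toFun t) := by
  unfold Curve.integral Curve.sub
  simp only
  have := (measurePreserving_add_left volume p).setLIntegral_comp_preimage_emb
    (measurableEmbedding_addLeft p) (fun t => f (γ.toFun t)) (Icc p q)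
  rw [← this]
  congr 2
  ext s
  simp

lemma Curve.sub_integral_le (γ : Curve X) (p q : ℝ) (hp : 0 ≤ p) (hpq : p ≤ q) (hq : q ≤ γ.len)
    (f : X → ℝ≥0∞) : (γ.sub p q hp hpq hq).integral f ≤ γ.integral f := by
  rw [γ.sub_integral]
  exact lintegral_mono_set (Icc_subset_Icc hp hq)


lemma Curve.aemeas (γ : Curve X) : AEMeasurable γ.toFun (volume.restrict (Icc 0 γ.len)) :=
  γ.cont.aemeasurable measurableSet_Icc

lemma Curve.ae_notMem {γ : Curve X} {Z : Set X} (hZ : MeasurableSet Z)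
    (h : γ.integral (Z.indicator (fun _ => ∞)) < ∞) :
    ∀ᵐ t : ℝ, t ∈ Icc 0 γ.len → γ.toFun t ∉ Z := by
  have hm : AEMeasurable (fun t => Z.indicator (fun _ => (∞ : ℝ≥0∞)) (γ.toFun t))
      (volume.restrict (Icc 0 γ.len)) :=
    (measurable_const.indicator hZ).comp_aemeasurable γ.aemeas
  have := ae_lt_top' hm h.ne
  rw [ae_restrict_iff' measurableSet_Icc] at this
  filter_upwards [this] with t ht h1 h2
  have := ht h1
  simp [h2] at this

lemma Curve.integral_mono {γ : Curve X} {f g : X → ℝ≥0∞} (h : ∀ x, f x ≤ g x) :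
    γ.integral f ≤ γ.integral g := lintegral_mono fun t => h _

/-- a.e.\ equal functions agree along a.e.\ curve -/
lemma AEC.of_ae {μ : Measure X} {P : X → Prop} (h : ∀ᵐ x ∂μ, P x) :
    AEC μ (fun γ => ∀ᵐ t : ℝ, t ∈ Icc 0 γ.len → P (γ.toFun t)) := by
  refine ⟨(toMeasurable μ {x | ¬ P x}).indicator (fun _ => ∞),
    measurable_const.indicator (measurableSet_toMeasurable _ _), ?_, ?_⟩
  · rw [lintegral_indicator (measurableSet_toMeasurable _ _)]
    simp [measure_toMeasurable, ae_iff.1 h]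
  · intro γ hγ
    filter_upwards [Curve.ae_notMem (measurableSet_toMeasurable _ _) hγ] with t ht h1
    by_contra hc
    exact ht h1 (subset_toMeasurable _ _ hc)

lemma AEC.of_lintegral {μ : Measure X} {f : X → ℝ≥0∞} (hf : Measurable f)
    (h : ∫⁻ x, f x ∂μ < ∞) : AEC μ (fun γ => γ.integral f < ∞) :=
  ⟨f, hf, h, fun _ h => h⟩

lemma DUG.of_wug_aux {μ : Measure X} {B : Set X} (hB : IsOpen B) {v : X → ℝ} {g : X → ℝ≥0∞}
    (h : IsWeakUpperGradientOn μ v g B) (hfin : ∫⁻ x in B, g x ∂μ < ∞) : DUG μ B v g := by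
  obtain ⟨hg, ρ, hρ1, hρ2, hρ3⟩ := h
  set g' := hg.mk g with hg'
  have hg'm : Measurable g' := hg.measurable_mk
  have hgg : ∀ᵐ x ∂μ, g x = g' x := hg.ae_eq_mk
  have hA1 : AEC μ (fun γ => γ.integral ρ < ∞) := AEC.of_lintegral hρ1 hρ2
  have hA2 := AEC.of_ae hgg
  have hA3 : AEC μ (fun γ => γ.integral (B.indicator g') < ∞) := by
    apply AEC.of_lintegral (hg'm.indicator hB.measurableSet)
    rw [lintegral_indicator hB.measurableSet]
    rwa [← lintegral_congr_ae (ae_restrict_of_ae hgg)]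
  refine (hA1.and (hA2.and hA3)).mono ?_
  rintro γ ⟨h1, h2, h3⟩
  have key := ae_of_local (S := {t | t ∈ Ioo 0 γ.len ∧ γ.toFun t ∈ B})
    (P := fun t => ∀ D : ℝ,
    HasDerivAt (fun s => v (γ.toFun s)) D t → ENNReal.ofReal |D| ≤ g (γ.toFun t)) ?_
  · filter_upwards [key] with t ht a b using ht ⟨a, b⟩
  rintro t0 ⟨ht0, ht0B⟩
  obtain ⟨p, q, hp, hpt, htq, hq, hin⟩ := γ.exists_interval hB ht0 ht0B
  have hpq : p ≤ q := by linarith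
  have hsub : Icc p q ⊆ Icc 0 γ.len := Icc_subset_Icc hp hq
  refine ⟨Ioo p q, Ioo_mem_nhds hpt htq, ?_⟩
  set F : ℝ → ℝ := fun s => (g' (γ.toFun s)).toReal with hF
  have hmeas : AEMeasurable (fun s => g' (γ.toFun s)) (volume.restrict (Icc p q)) :=
    hg'm.comp_aemeasurable (γ.aemeas.mono_measure (Measure.restrict_mono hsub le_rfl))
  have hint : ∫⁻ s in Icc p q, g' (γ.toFun s) < ∞ := by
    refine lt_of_le_of_lt ?_ h3
    unfold Curve.integral
    refine le_trans ?_ (lintegral_mono_set hsub)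
    apply setLIntegral_mono' measurableSet_Icc
    intro s hs
    simp [hin s hs]
  have hFint : IntegrableOn F (Icc p q) := integrable_toReal_of_lintegral_ne_top hmeas hint.ne
  have hFii : ∀ a b, a ∈ Icc p q → b ∈ Icc p q → IntervalIntegrable F volume a b := by
    intro a b ha hb
    apply IntegrableOn.intervalIntegrable
    exact hFint.mono_set (uIcc_subset_Icc ha hb)
  have hfinae : ∀ᵐ s : ℝ, s ∈ Icc p q → g' (γ.toFun s) < ∞ := by
    have := ae_lt_top' hmeas hint.ne
    rwa [ae_restrict_iff' measurableSet_Icc] at this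
  have hup : ∀ a b, a ∈ Icc p q → b ∈ Icc p q → a ≤ b →
      |v (γ.toFun a) - v (γ.toFun b)| ≤ ∫ s in a..b, F s := by
    intro a b ha hb hab
    have hUG : UGIneq v g (γ.sub a b (hp.trans ha.1) hab (hb.2.trans hq)) := by
      by_contra hcon
      have hIn : (γ.sub a b (hp.trans ha.1) hab (hb.2.trans hq)).In B := by
        intro s hs
        apply hin
        have hs1 := hs.1
        have hs2 : s ≤ b - a := hs.2
        exact ⟨by linarith [ha.1], by linarith [hb.2]⟩
      have := hρ3 _ ⟨hIn, hcon⟩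
      have h4 := γ.sub_integral_le a b (hp.trans ha.1) hab (hb.2.trans hq) ρ
      rw [this] at h4
      exact absurd h1 (by simpa using h4)
    unfold UGIneq at hUG
    rw [γ.sub_integral] at hUG
    have e1 : (γ.sub a b (hp.trans ha.1) hab (hb.2.trans hq)).toFun 0 = γ.toFun a := by
      simp [Curve.sub]
    have e2 : (γ.sub a b (hp.trans ha.1) hab (hb.2.trans hq)).toFun
      (γ.sub a b (hp.trans ha.1) hab (hb.2.trans hq)).len = γ.toFun b := by
      simp [Curve.sub]
    rw [e1, e2] at hUG
    have hsub2 : Icc a b ⊆ Icc p q := Icc_subset_Icc ha.1 hb.2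
    have e3 : ∫⁻ t in Icc a b, g (γ.toFun t) = ENNReal.ofReal (∫ s in a..b, F s) := by
      rw [intervalIntegral.integral_of_le hab, ← integral_Icc_eq_integral_Ioc,
        ofReal_integral_eq_lintegral_ofReal (hFint.mono_set hsub2)
          (Eventually.of_forall fun s => ENNReal.toReal_nonneg)]
      apply setLIntegral_congr_fun_ae measurableSet_Icc
      filter_upwards [h2, hfinae] with s hs hs' hsm
      rw [hs (hsub (hsub2 hsm)), hF, ENNReal.ofReal_toReal (hs' (hsub2 hsm)).ne]
    rw [e3] at hUG
    refine (ENNReal.ofReal_le_ofReal_iff ?_).1 hUG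
    exact intervalIntegral.integral_nonneg hab (fun s _ => ENNReal.toReal_nonneg)
  have hpm : p ∈ Icc p q := ⟨le_rfl, hpq⟩
  have hqm : q ∈ Icc p q := ⟨hpq, le_rfl⟩
  have hder := (hFii p q hpm hqm).ae_hasDerivAt_integral
  filter_upwards [hder, h2] with t hd h2t htI _ D hD
  have htIcc : t ∈ Icc p q := Ioo_subset_Icc_self htI
  have hd' := hd (by rwa [uIcc_of_le hpq]) p (by simp)
  have := deriv_le_of_dom hD hd' ?_
  · rw [h2t (hsub htIcc)]
    calc ENNReal.ofReal |D| ≤ ENNReal.ofReal |F t| := ENNReal.ofReal_le_ofReal this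
      _ = ENNReal.ofReal (F t) := by rw [abs_of_nonneg ENNReal.toReal_nonneg]
      _ ≤ _ := ENNReal.ofReal_toReal_le
  · filter_upwards [Ioo_mem_nhds htI.1 htI.2] with s hs
    have hsI : s ∈ Icc p q := Ioo_subset_Icc_self hs
    rw [intervalIntegral.integral_interval_sub_left (hFii p s hpm hsI) (hFii p t hpm htIcc)]
    rcases le_total s t with hst | hst
    · rw [intervalIntegral.integral_symm, abs_neg]
      exact (hup s t hsI htIcc hst).trans (le_abs_self _)
    · rw [abs_sub_comm]
      exact (hup t s htIcc hsI hst).trans (le_abs_self _)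

lemma IsWeakUpperGradientOn.mono_set {μ : Measure X} {A B : Set X} {v : X → ℝ} {g : X → ℝ≥0∞}
    (h : IsWeakUpperGradientOn μ v g A) (hBA : B ⊆ A) : IsWeakUpperGradientOn μ v g B := by
  obtain ⟨hg, ρ, h1, h2, h3⟩ := h
  exact ⟨hg, ρ, h1, h2, fun γ hγ => h3 γ ⟨fun t ht => hBA (hγ.1 t ht), hγ.2⟩⟩

lemma DUG.mono_set {μ : Measure X} {A B : Set X} {v : X → ℝ} {g : X → ℝ≥0∞}
    (h : DUG μ A v g) (hBA : B ⊆ A) : DUG μ B v g :=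
  AEC.mono h fun γ hγ => by
    filter_upwards [hγ] with t ht h1 h2 using ht h1 (hBA h2)

lemma DUG.mono {μ : Measure X} {A : Set X} {v : X → ℝ} {g g' : X → ℝ≥0∞}
    (h : DUG μ A v g) (hg : ∀ x ∈ A, g x ≤ g' x) : DUG μ A v g' :=
  AEC.mono h fun γ hγ => by
    filter_upwards [hγ] with t ht h1 h2 D hD using (ht h1 h2 D hD).trans (hg _ h2)

lemma DUG.iInf {μ : Measure X} {A : Set X} {v : X → ℝ} {g : ℕ → X → ℝ≥0∞}
    (h : ∀ k, DUG μ A v (g k)) : DUG μ A v (fun x => ⨅ k, g k x) :=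
  AEC.mono (AEC.all h) fun γ hγ => by
    filter_upwards [ae_all_iff.2 hγ] with t ht h1 h2 D hD using le_iInf fun k => ht k h1 h2 D hD

lemma DUG.min {μ : Measure X} {A : Set X} {v : X → ℝ} {g g' : X → ℝ≥0∞}
    (h : DUG μ A v g) (h' : DUG μ A v g') : DUG μ A v (fun x => min (g x) (g' x)) :=
  AEC.mono (AEC.and h h') fun γ hγ => by
    filter_upwards [hγ.1, hγ.2] with t ht ht' h1 h2 D hD using
      le_min (ht h1 h2 D hD) (ht' h1 h2 D hD)

lemma DUG.of_local [SecondCountableTopology X] {μ : Measure X} {A : Set X} {v : X → ℝ}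
    {g : X → ℝ≥0∞} (h : ∀ x ∈ A, ∃ r > (0 : ℝ), DUG μ (A ∩ ball x r) v g) : DUG μ A v g := by
  choose! r hr hD using h
  obtain ⟨T, hTA, hTc, hcov⟩ := TopologicalSpace.countable_cover_nhdsWithin
    (f := fun x => ball x (r x)) (s := A)
    (fun x hx => mem_nhdsWithin_of_mem_nhds (ball_mem_nhds _ (hr x hx)))
  rcases T.eq_empty_or_nonempty with hT | hT
  · subst hT
    have hA : A = ∅ := by simpa using hcov
    subst hA
    exact AEC.of_all fun γ => Eventually.of_forall fun t _ h => absurd h (by simp)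
  obtain ⟨f, hf⟩ := hTc.exists_eq_range hT
  have hfm : ∀ k, f k ∈ A := fun k => hTA (by rw [hf]; exact mem_range_self k)
  refine AEC.mono (AEC.all fun k => hD (f k) (hfm k)) fun γ hγ => ?_
  filter_upwards [ae_all_iff.2 hγ] with t ht h1 h2 D hDv
  have := hcov h2
  rw [hf] at this
  simp only [mem_range, iUnion_exists, iUnion_iUnion_eq', mem_iUnion] at this
  obtain ⟨k, hk⟩ := this
  exact ht k h1 ⟨h2, hk⟩ D hDv

lemma DUG.of_wug [SecondCountableTopology X] {μ : Measure X} {A : Set X} (hA : IsOpen A)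
    {v : X → ℝ} {g : X → ℝ≥0∞}
    (h : IsWeakUpperGradientOn μ v g A) (hl : LIntegrableLocOn μ g A) : DUG μ A v g := by
  apply DUG.of_local
  intro x hx
  obtain ⟨r, hr, hfin⟩ := hl x hx
  exact ⟨r, hr, DUG.of_wug_aux (hA.inter isOpen_ball) (h.mono_set inter_subset_left) hfin⟩

lemma DUG.wug {μ : Measure X} {A : Set X} (hA : IsOpen A) {v : X → ℝ} {g : X → ℝ≥0∞}
    (hv : LocLipOn v A) (hg : AEMeasurable g μ) (h : DUG μ A v g) :
    IsWeakUpperGradientOn μ v g A := by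
  obtain ⟨ρ, h1, h2, h3⟩ := h
  refine ⟨hg, ρ, h1, h2, ?_⟩
  rintro γ ⟨hin, hcon⟩
  by_contra hne
  apply hcon
  have hae := h3 γ (lt_top_iff_ne_top.2 hne)
  have hdiff := hv.ae_diff hA γ
  obtain ⟨K, hK⟩ := hv.comp_curve γ le_rfl le_rfl hin
  have hlen := γ.len_nonneg
  have hac := (uIcc_of_le hlen ▸ hK :
      LipschitzOnWith K (fun s => v (γ.toFun s)) (uIcc 0 γ.len)).absolutelyContinuousOnInterval
  have hftc := hac.integral_deriv_eq_sub
  have hii := hac.intervalIntegrable_deriv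
  unfold UGIneq Curve.integral
  rw [abs_sub_comm, ← hftc]
  have hio : IntegrableOn (deriv (fun s => v (γ.toFun s))) (Ioc 0 γ.len) :=
    (intervalIntegrable_iff_integrableOn_Ioc_of_le hlen).1 hii
  calc ENNReal.ofReal |∫ t in (0:ℝ)..γ.len, deriv (fun s => v (γ.toFun s)) t|
      ≤ ENNReal.ofReal (∫ t in (0:ℝ)..γ.len, |deriv (fun s => v (γ.toFun s)) t|) :=
        ENNReal.ofReal_le_ofReal (intervalIntegral.abs_integral_le_integral_abs hlen)
    _ = ∫⁻ t in Ioc 0 γ.len, ENNReal.ofReal |deriv (fun s => v (γ.toFun s)) t| := by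
        rw [intervalIntegral.integral_of_le hlen,
          ofReal_integral_eq_lintegral_ofReal hio.abs (Eventually.of_forall fun s => abs_nonneg _)]
    _ ≤ ∫⁻ t in Ioc 0 γ.len, g (γ.toFun t) := by
        rw [← restrict_Ioo_eq_restrict_Ioc]
        apply lintegral_mono_ae
        rw [ae_restrict_iff' measurableSet_Ioo]
        filter_upwards [hae, hdiff] with t ha hd ht
        have hA' := hin t (Ioo_subset_Icc_self ht)
        exact ha ht hA' _ (hd ht hA').hasDerivAt
    _ ≤ _ := lintegral_mono_set Ioc_subset_Icc_self

/-- existence of minimal weak upper gradients -/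
lemma exists_minimal [SecondCountableTopology X] {μ : Measure X} {A : Set X} (hA : IsOpen A)
    {v : X → ℝ} {g₀ : X → ℝ≥0∞}
    (hv : LocLipOn v A) (hg : AEMeasurable g₀ μ) (h : DUG μ A v g₀) (hfin : ∫⁻ x in A, g₀ x ∂μ < ∞) :
    ∃ g, IsMinimalWUG μ v g A ∧ ∫⁻ x in A, g x ∂μ ≤ ∫⁻ x in A, g₀ x ∂μ := by
  set S : Set ℝ≥0∞ := {a | ∃ g, AEMeasurable g μ ∧ DUG μ A v g ∧ ∫⁻ x in A, g x ∂μ = a} with hS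
  have hne : S.Nonempty := ⟨_, g₀, hg, h, rfl⟩
  obtain ⟨u, -, hu1, hu2⟩ := exists_seq_tendsto_sInf hne (OrderBot.bddBelow S)
  choose G hG1 hG2 hG3 using hu2
  set g : X → ℝ≥0∞ := fun x => ⨅ k, G k x with hgdef
  have hgm : AEMeasurable g μ := AEMeasurable.iInf hG1
  have hgD : DUG μ A v g := DUG.iInf hG2
  have hgle : ∫⁻ x in A, g x ∂μ ≤ sInf S := by
    refine ge_of_tendsto' hu1 fun k => ?_
    rw [← hG3 k]
    exact lintegral_mono fun x => iInf_le _ k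
  have hginf : ∀ g', AEMeasurable g' μ → DUG μ A v g' → ∫⁻ x in A, g x ∂μ ≤ ∫⁻ x in A, g' x ∂μ :=
    fun g' h1 h2 => hgle.trans (sInf_le ⟨g', h1, h2, rfl⟩)
  refine ⟨g, ⟨hgD.wug hA hv hgm, ?_⟩, hginf _ hg h⟩
  intro g' hg' hloc
  have hD' := DUG.of_wug hA hg' hloc
  have hmin := hginf _ (hgm.min hg'.1) (hgD.min hD')
  have heq := ae_eq_of_ae_le_of_lintegral_le (μ := μ.restrict A)
    (f := fun x => min (g x) (g' x)) (g := g) (Eventually.of_forall fun x => min_le_left _ _)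
    (ne_top_of_le_ne_top hfin.ne ((lintegral_mono fun x => min_le_left _ _).trans (hginf _ hg h)))
    hgm.restrict hmin
  filter_upwards [heq] with x hx
  rw [← hx]; exact min_le_right _ _

lemma Doubling.pow {μ : Measure X} {Cd : ℝ} (h : Doubling μ Cd) (x : X) (n : ℕ) {r : ℝ} (hr : 0 < r) :
    μ (ball x (2 ^ n * r)) ≤ ENNReal.ofReal Cd ^ n * μ (ball x r) := by
  induction n with
  | zero => simp
  | succ n ih =>
    have h1 := (h.2 x (2 ^ n * r) (by positivity)).2.1
    rw [pow_succ', pow_succ', mul_assoc, mul_assoc]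
    refine h1.trans ?_
    gcongr

lemma Doubling.proper {μ : Measure X} {Cd : ℝ} (h : Doubling μ Cd) [CompleteSpace X] :
    ProperSpace X := by
  constructor
  intro x R
  rw [isCompact_iff_totallyBounded_isComplete]
  refine ⟨?_, isClosed_closedBall.isComplete⟩
  rw [Metric.totallyBounded_iff]
  intro ε hε
  by_contra hcon
  push Not at hcon
  have : Std.Symm (fun y z : X => ε ≤ dist y z) := ⟨fun y z h => by rwa [dist_comm]⟩
  obtain ⟨f, hf1, hf2⟩ := exists_seq_of_forall_finset_exists' (fun y => y ∈ closedBall x R)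
    (fun y z => ε ≤ dist y z) (by
      intro s hs
      have := hcon s s.finite_toSet
      rw [not_subset] at this
      obtain ⟨y, hy, hy2⟩ := this
      refine ⟨y, hy, fun z hz => ?_⟩
      by_contra hlt
      push Not at hlt
      apply hy2
      simp only [mem_iUnion]
      exact ⟨z, hz, by rwa [mem_ball, dist_comm]⟩)
  have hR : 0 ≤ R := le_trans dist_nonneg (mem_closedBall.1 (hf1 0))
  have hCd : ENNReal.ofReal Cd ≠ 0 := by
    have := h.1
    simp; linarith
  obtain ⟨n, hn⟩ := pow_unbounded_of_one_lt ((2 * R + 1) / (ε / 2)) (one_lt_two)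
  rw [div_lt_iff₀ (by positivity)] at hn
  have hlow : ∀ k, μ (ball x (R + 1)) / ENNReal.ofReal Cd ^ n ≤ μ (ball (f k) (ε / 2)) := by
    intro k
    apply ENNReal.div_le_of_le_mul'
    refine le_trans (measure_mono ?_) (h.pow (f k) n (by positivity))
    apply ball_subset_ball'
    have := mem_closedBall.1 (hf1 k)
    rw [dist_comm] at this
    linarith
  have hpos : 0 < μ (ball x (R + 1)) / ENNReal.ofReal Cd ^ n := by
    apply ENNReal.div_pos _ (by simp)
    have := (h.2 x ((R + 1)/2) (by positivity)).1
    rw [mul_div_cancel₀ _ (two_ne_zero)] at this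
    exact this.ne'
  have hfin := Measure.finite_const_le_meas_of_disjoint_iUnion μ hpos
    (As := fun k => ball (f k) (ε / 2)) (fun k => measurableSet_ball) (by
      intro i j hij
      apply ball_disjoint_ball
      have : ε ≤ dist (f i) (f j) := hf2 hij
      linarith) (by
      refine ne_top_of_le_ne_top (h.2 x (R + ε) (by positivity)).2.2.ne (measure_mono ?_)
      apply iUnion_subset
      intro k
      apply ball_subset_ball'
      have := mem_closedBall.1 (hf1 k)
      linarith)
  apply Set.infinite_univ (α := ℕ)
  refine hfin.subset fun k _ => hlow k

lemma Doubling.finiteOnCompacts {μ : Measure X} {Cd : ℝ} (h : Doubling μ Cd) :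
    IsLocallyFiniteMeasure μ :=
  ⟨fun x => ⟨ball x 1, ball_mem_nhds _ one_pos, (h.2 x 1 one_pos).2.2⟩⟩

/-- local-to-bounded convergence -/
lemma tendsto_of_local [SecondCountableTopology X] {μ : Measure X} {A : Set X} {f : ℕ → X → ℝ≥0∞}
    (hf : ∀ i x, f i x ≤ 1)
    (h : ∀ x ∈ A, ∃ r > (0 : ℝ), Tendsto (fun i => ∫⁻ y in A ∩ ball x r, f i y ∂μ) atTop (𝓝 0))
    {B : Set X} (hB : MeasurableSet B) (hBfin : μ B < ∞) :
    Tendsto (fun i => ∫⁻ y in A ∩ B, f i y ∂μ) atTop (𝓝 0) := by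
  rcases A.eq_empty_or_nonempty with hA | hA
  · simp [hA]
  choose! r hr hD using h
  obtain ⟨T, hTA, hTc, hcov⟩ := TopologicalSpace.countable_cover_nhdsWithin
    (f := fun x => ball x (r x)) (s := A)
    (fun x hx => mem_nhdsWithin_of_mem_nhds (ball_mem_nhds _ (hr x hx)))
  have hT : T.Nonempty := by
    by_contra hcon
    rw [not_nonempty_iff_eq_empty] at hcon
    subst hcon
    obtain ⟨a, ha⟩ := hA
    simpa using hcov ha
  obtain ⟨c, hc⟩ := hTc.exists_eq_range hT
  have hfm : ∀ k, c k ∈ A := fun k => hTA (by rw [hc]; exact mem_range_self k)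
  set O : ℕ → Set X := fun n => ⋃ k ∈ Finset.range n, ball (c k) (r (c k)) with hO
  have hOm : ∀ n, MeasurableSet (O n) := fun n =>
    Finset.measurableSet_biUnion _ fun k _ => measurableSet_ball
  -- the measure of the rest tends to 0
  have hrest : Tendsto (fun n => (μ.restrict (A ∩ B)) (O n)ᶜ) atTop (𝓝 0) := by
    have hanti : Antitone (fun n => (O n)ᶜ) := by
      intro m n hmn
      apply compl_subset_compl.2
      exact biUnion_subset_biUnion_left (by intro x hx; simp at hx ⊢; omega)
    have hlim := tendsto_measure_iInter_atTop (μ := μ.restrict (A ∩ B)) (s := fun n => (O n)ᶜ)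
      (fun n => (hOm n).compl.nullMeasurableSet) hanti ⟨0, by
        refine ne_top_of_le_ne_top hBfin.ne ?_
        refine (measure_mono (subset_univ _)).trans ?_
        rw [Measure.restrict_apply_univ]
        exact measure_mono inter_subset_right⟩
    have hz : (μ.restrict (A ∩ B)) (⋂ n, (O n)ᶜ) = 0 := ?_
    · rw [hz] at hlim; exact hlim
    rw [Measure.restrict_apply (MeasurableSet.iInter fun n => (hOm n).compl)]
    convert measure_empty (μ := μ)
    ext x
    simp only [mem_inter_iff, mem_iInter, mem_compl_iff, mem_empty_iff_false, iff_false, not_and]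
    intro hx hxA
    exfalso
    have := hcov hxA
    rw [hc] at this
    simp only [mem_range, iUnion_exists, iUnion_iUnion_eq', mem_iUnion] at this
    obtain ⟨k, hk⟩ := this
    apply hx (k + 1)
    simp only [hO, mem_iUnion]
    exact ⟨k, by simp, hk⟩
  rw [ENNReal.tendsto_nhds_zero]
  intro ε hε
  rw [ENNReal.tendsto_nhds_zero] at hrest
  obtain ⟨n, hn⟩ := (hrest (ε / 2) (ENNReal.half_pos hε.ne')).exists
  have hsum : Tendsto (fun i => ∑ k ∈ Finset.range n, ∫⁻ y in A ∩ ball (c k) (r (c k)), f i y ∂μ)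
      atTop (𝓝 0) := by
    have := tendsto_finsetSum (Finset.range n) (fun k _ => hD (c k) (hfm k))
    simpa using this
  rw [ENNReal.tendsto_nhds_zero] at hsum
  filter_upwards [hsum (ε / 2) (ENNReal.half_pos hε.ne')] with i hi
  rw [← lintegral_add_compl _ (hOm n)]
  rw [← ENNReal.add_halves ε]
  refine add_le_add ?_ ?_
  · refine le_trans ?_ hi
    rw [Measure.restrict_restrict (hOm n)]
    have hsub : O n ∩ (A ∩ B) ⊆ ⋃ k ∈ Finset.range n, A ∩ ball (c k) (r (c k)) := by
      rintro x ⟨h1, h2, h3⟩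
      simp only [hO, mem_iUnion] at h1 ⊢
      obtain ⟨k, hk, hx⟩ := h1
      exact ⟨k, hk, h2, hx⟩
    refine (lintegral_mono_set hsub).trans ?_
    clear hsub hi hn hsum
    induction n with
    | zero => simp
    | succ n ih =>
      rw [Finset.sum_range_succ, Finset.range_add_one, Finset.set_biUnion_insert, union_comm]
      exact (lintegral_union_le _ _ _).trans (add_le_add_left ih _)
  · refine le_trans ?_ hn
    refine (lintegral_mono (hf i)).trans ?_
    simp

/-- characteristic function -/
abbrev chi (E : Set X) : X → ℝ := Set.indicator E (fun _ => (1 : ℝ))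

lemma chi_mem (E : Set X) (x : X) : chi E x ∈ Icc (0 : ℝ) 1 := by
  unfold chi indicator; split_ifs <;> simp

lemma abs_sub_le_one {a b : ℝ} (ha : a ∈ Icc (0 : ℝ) 1) (hb : b ∈ Icc (0 : ℝ) 1) : |a - b| ≤ 1 := by
  rw [abs_le]; constructor <;> linarith [ha.1, ha.2, hb.1, hb.2]

lemma DUG.contraction {μ : Measure X} {A : Set X} (hA : IsOpen A) {v w : X → ℝ} {g : X → ℝ≥0∞}
    (hv : LocLipOn v A) (h : DUG μ A v g) (hw : ∀ x y, |w x - w y| ≤ |v x - v y|) : DUG μ A w g :=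
  AEC.mono h fun γ hγ => by
    filter_upwards [hγ, hv.ae_diff hA γ] with t ht hd h1 h2 D hD
    have h3 := (hd h1 h2).hasDerivAt
    refine le_trans (ENNReal.ofReal_le_ofReal ?_) (ht h1 h2 _ h3)
    exact deriv_le_of_dom hD h3 (Eventually.of_forall fun s => hw _ _)

lemma LocLipOn.contraction {A : Set X} {v w : X → ℝ}
    (hv : LocLipOn v A) (hw : ∀ x y, |w x - w y| ≤ |v x - v y|) : LocLipOn w A := by
  intro x hx
  obtain ⟨r, hr, K, hK⟩ := hv x hx
  refine ⟨r, hr, K, ?_⟩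
  rw [lipschitzOnWith_iff_dist_le_mul] at hK ⊢
  intro y hy z hz
  refine le_trans ?_ (hK y hy z hz)
  rw [Real.dist_eq, Real.dist_eq]
  exact hw y z

lemma LocLipOn.mono {A B : Set X} {v : X → ℝ} (hv : LocLipOn v A) (h : B ⊆ A) : LocLipOn v B := by
  intro x hx
  obtain ⟨r, hr, K, hK⟩ := hv x (h hx)
  exact ⟨r, hr, K, hK.mono (inter_subset_inter_left _ h)⟩

/-- truncation -/
def trunc (a : ℝ) : ℝ := max 0 (min 1 a)

lemma trunc_mem (a : ℝ) : trunc a ∈ Icc (0 : ℝ) 1 := by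
  unfold trunc
  exact ⟨le_max_left _ _, max_le zero_le_one (min_le_left _ _)⟩

lemma trunc_contr (a b : ℝ) : |trunc a - trunc b| ≤ |a - b| := by
  unfold trunc
  have h1 := abs_max_sub_max_le_max (0 : ℝ) (min 1 a) 0 (min 1 b)
  have h2 := abs_min_sub_min_le_max (1 : ℝ) a 1 b
  simp only [sub_self, abs_zero] at h1 h2
  rw [max_eq_right (abs_nonneg (min 1 a - min 1 b))] at h1
  rw [max_eq_right (abs_nonneg (a - b))] at h2
  exact h1.trans h2

lemma trunc_id {a : ℝ} (ha : a ∈ Icc (0 : ℝ) 1) : trunc a = a := by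
  unfold trunc
  rw [min_eq_right ha.2, max_eq_right ha.1]

lemma approx_of_tvOpen [SecondCountableTopology X] {μ : Measure X} [IsLocallyFiniteMeasure μ]
    {Ω : Set X} (hΩ : IsOpen Ω) {E : Set X} {c : ℝ≥0∞} (h : tvOpen μ Ω (chi E) < c)
    {B : Set X} (hB : MeasurableSet B) (hBfin : μ B < ∞) {τ : ℝ≥0∞} (hτ : 0 < τ) :
    ∃ v : X → ℝ, ∃ g : X → ℝ≥0∞, LocLipOn v Ω ∧ (∀ x, v x ∈ Icc (0 : ℝ) 1) ∧ AEMeasurable g μ ∧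
      DUG μ Ω v g ∧ ∫⁻ x in Ω, g x ∂μ < c ∧
      ∫⁻ x in Ω ∩ B, ENNReal.ofReal |v x - chi E x| ∂μ < τ := by
  unfold tvOpen at h
  simp only [iInf_lt_iff] at h
  obtain ⟨v, g, hv, hg, hconv, hlim⟩ := h
  have hfr := frequently_lt_of_liminf_lt (by isBoundedDefault) hlim
  have hle : ∀ i x, |trunc (v i x) - chi E x| ≤ |v i x - chi E x| := fun i x => by
    rw [← trunc_id (chi_mem E x)]
    refine (trunc_contr _ _).trans ?_
    rw [trunc_id (chi_mem E x)]
  have hT := tendsto_of_local (μ := μ) (A := Ω)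
    (f := fun i x => ENNReal.ofReal |trunc (v i x) - chi E x|) (fun i x => by
      rw [← ENNReal.ofReal_one]
      exact ENNReal.ofReal_le_ofReal (abs_sub_le_one (trunc_mem _) (chi_mem E x))) (by
      intro x hx
      obtain ⟨r, hr, hlim⟩ := hconv x hx
      refine ⟨r, hr, tendsto_of_tendsto_of_tendsto_of_le_of_le tendsto_const_nhds hlim
        (fun i => zero_le) (fun i => ?_)⟩
      exact lintegral_mono fun y => ENNReal.ofReal_le_ofReal (hle i y)) hB hBfin
  obtain ⟨i, h1, h2⟩ := (hfr.and_eventually (hT.eventually_lt_const hτ)).exists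
  have hloc : LIntegrableLocOn μ (g i) Ω := fun x hx => ⟨1, one_pos,
    lt_of_le_of_lt (lintegral_mono_set inter_subset_left) (lt_of_lt_of_le h1 le_top)⟩
  have hD := DUG.of_wug hΩ (hg i).1 hloc
  exact ⟨fun x => trunc (v i x), g i, (hv i).contraction fun x y => trunc_contr _ _,
    fun x => trunc_mem _, (hg i).1.1, hD.contraction hΩ (hv i) fun x y => trunc_contr _ _, h1, h2⟩

lemma tvOpen_le_of_approx [SecondCountableTopology X] {μ : Measure X}
    {Ω : Set X} (hΩ : IsOpen Ω) {u : X → ℝ} {c : ℝ≥0∞} (hc : c < ∞) (x₀ : X)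
    (v : ℕ → X → ℝ) (g : ℕ → X → ℝ≥0∞) (hv : ∀ i, LocLipOn (v i) Ω) (hg : ∀ i, AEMeasurable (g i) μ)
    (hD : ∀ i, DUG μ Ω (v i) (g i)) (hle : ∀ i, ∫⁻ x in Ω, g i x ∂μ ≤ c)
    (hconv : ∀ R : ℝ, Tendsto (fun i => ∫⁻ x in Ω ∩ ball x₀ R, ENNReal.ofReal |v i x - u x| ∂μ)
      atTop (𝓝 0)) : tvOpen μ Ω u ≤ c := by
  have := fun i => exists_minimal hΩ (hv i) (hg i) (hD i) ((hle i).trans_lt hc)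
  choose G hG1 hG2 using this
  have hL : L1LocConv μ Ω v u := by
    intro x hx
    refine ⟨1, one_pos, tendsto_of_tendsto_of_tendsto_of_le_of_le tendsto_const_nhds
      (hconv (1 + dist x x₀)) (fun i => zero_le) (fun i => lintegral_mono_set ?_)⟩
    exact inter_subset_inter_right _ (ball_subset_ball' le_rfl)
  unfold tvOpen
  refine iInf_le_of_le v ?_
  refine iInf_le_of_le G ?_
  refine iInf_le_of_le hv ?_
  refine iInf_le_of_le hG1 ?_
  refine iInf_le_of_le hL ?_
  refine (liminf_le_liminf (v := fun _ => c)
    (Eventually.of_forall fun i => (hG2 i).trans (hle i))).trans ?_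
  rw [liminf_const]

/-- discrete chains -/
inductive Reach (Y K : Set X) (c : X → ℝ≥0∞) (δ : ℝ) : X → ℝ≥0∞ → Prop
  | base {x : X} {a : ℝ≥0∞} : x ∈ K → Reach Y K c δ x a
  | step {x y : X} {a b : ℝ≥0∞} : Reach Y K c δ x a → y ∈ Y → dist x y ≤ δ →
      a + c x * ENNReal.ofReal (dist x y) ≤ b → Reach Y K c δ y b

lemma Reach.mono {Y K : Set X} {c : X → ℝ≥0∞} {δ : ℝ} {Y' K' : Set X} {c' : X → ℝ≥0∞} {δ' : ℝ}
    (hY : Y ⊆ Y') (hK : K ⊆ K') (hc : ∀ x, c' x ≤ c x) (hδ : δ ≤ δ') {x : X} {a : ℝ≥0∞}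
    (h : Reach Y K c δ x a) : Reach Y' K' c' δ' x a := by
  induction h with
  | base hx => exact .base (hK hx)
  | step _ hy hd hab ih =>
    refine .step ih (hY hy) (hd.trans hδ) (le_trans ?_ hab)
    gcongr
    exact hc _

lemma Reach.up {Y K : Set X} {c : X → ℝ≥0∞} {δ : ℝ} {x : X} {a b : ℝ≥0∞}
    (h : Reach Y K c δ x a) (hab : a ≤ b) : Reach Y K c δ x b := by
  cases h with
  | base hx => exact .base hx
  | step h1 hy hd h2 => exact .step h1 hy hd (h2.trans hab)

lemma Reach.mem {Y K : Set X} {c : X → ℝ≥0∞} {δ : ℝ} {x : X} {a : ℝ≥0∞} (hKY : K ⊆ Y)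
    (h : Reach Y K c δ x a) : x ∈ Y := by
  cases h with
  | base hx => exact hKY hx
  | step h1 hy hd h2 => exact hy

/-- chain distance -/
def rf (Y K : Set X) (c : X → ℝ≥0∞) (δ : ℝ) (x : X) : ℝ≥0∞ := sInf {a | Reach Y K c δ x a}

/-- chain cutoff -/
def re (Y K : Set X) (c : X → ℝ≥0∞) (δ : ℝ) (x : X) : ℝ≥0∞ := 1 - rf Y K c δ x

lemma re_le_one (Y K : Set X) (c : X → ℝ≥0∞) (δ : ℝ) (x : X) : re Y K c δ x ≤ 1 := tsub_le_self

lemma re_ne_top (Y K : Set X) (c : X → ℝ≥0∞) (δ : ℝ) (x : X) : re Y K c δ x ≠ ∞ :=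
  ne_top_of_le_ne_top ENNReal.one_ne_top (re_le_one _ _ _ _ _)

lemma re_mono {Y K : Set X} {c : X → ℝ≥0∞} {δ : ℝ} {Y' K' : Set X} {c' : X → ℝ≥0∞} {δ' : ℝ}
    (hY : Y ⊆ Y') (hK : K ⊆ K') (hc : ∀ x, c' x ≤ c x) (hδ : δ ≤ δ') (x : X) :
    re Y K c δ x ≤ re Y' K' c' δ' x := by
  unfold re rf
  exact tsub_le_tsub_left (sInf_le_sInf fun a ha => ha.mono hY hK hc hδ) _

lemma re_of_mem {Y K : Set X} {c : X → ℝ≥0∞} {δ : ℝ} {x : X} (hx : x ∈ K) : re Y K c δ x = 1 := by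
  unfold re rf
  have : sInf {a | Reach Y K c δ x a} = 0 := by
    apply le_antisymm _ zero_le
    exact sInf_le (.base hx)
  rw [this, tsub_zero]

lemma re_of_notMem {Y K : Set X} {c : X → ℝ≥0∞} {δ : ℝ} {x : X} (hKY : K ⊆ Y) (hx : x ∉ Y) :
    re Y K c δ x = 0 := by
  unfold re rf
  have : {a | Reach Y K c δ x a} = ∅ := by
    ext a; simp only [mem_ofPred_eq, mem_empty_iff_false, iff_false]
    exact fun h => hx (h.mem hKY)
  rw [this]; simp

lemma re_le {Y K : Set X} {c : X → ℝ≥0∞} {δ : ℝ} {x y : X} (hy : y ∈ Y) (hd : dist x y ≤ δ) :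
    re Y K c δ x ≤ re Y K c δ y + c x * ENNReal.ofReal (dist x y) := by
  have hf : rf Y K c δ y ≤ rf Y K c δ x + c x * ENNReal.ofReal (dist x y) := by
    unfold rf
    rw [ENNReal.sInf_add]
    refine le_iInf₂ fun a ha => ?_
    exact sInf_le (Reach.step (show Reach Y K c δ x a from ha) hy hd le_rfl)
  unfold re
  rw [tsub_le_iff_right]
  calc (1 : ℝ≥0∞) ≤ 1 - rf Y K c δ y + rf Y K c δ y := le_tsub_add
    _ ≤ 1 - rf Y K c δ y + (rf Y K c δ x + c x * ENNReal.ofReal (dist x y)) := by gcongr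
    _ = _ := by ring

lemma re_real {Y K : Set X} {c : X → ℝ≥0∞} {δ : ℝ} {x y : X} (hc : c x ≠ ∞)
    (hy : y ∈ Y) (hd : dist x y ≤ δ) :
    (re Y K c δ x).toReal - (re Y K c δ y).toReal ≤ (c x).toReal * dist x y := by
  have h := re_le (K := K) (c := c) hy hd
  have h2 := ENNReal.toReal_mono (by finiteness [re_ne_top Y K c δ y]) h
  rw [ENNReal.toReal_add (re_ne_top _ _ _ _ _) (by finiteness), ENNReal.toReal_mul,
    ENNReal.toReal_ofReal dist_nonneg] at h2
  linarith

lemma re_lip {Y K : Set X} {c : X → ℝ≥0∞} {δ : ℝ} {N : ℝ≥0} (hc : ∀ x, c x ≤ N) {x y : X}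
    (hx : x ∈ Y) (hy : y ∈ Y) (hd : dist x y ≤ δ) :
    |(re Y K c δ x).toReal - (re Y K c δ y).toReal| ≤ N * dist x y := by
  have hfin : ∀ x, c x ≠ ∞ := fun x => ne_top_of_le_ne_top ENNReal.coe_ne_top (hc x)
  have hN : ∀ x, (c x).toReal ≤ N := fun x => by
    have := ENNReal.toReal_mono ENNReal.coe_ne_top (hc x)
    simpa using this
  rw [abs_le]
  constructor
  · have h1 := re_real (K := K) (δ := δ) (hfin y) hx (by rwa [dist_comm])
    rw [dist_comm y x] at h1
    have := mul_le_mul_of_nonneg_right (hN y) (dist_nonneg (x := x) (y := y))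
    linarith
  · have h1 := re_real (K := K) (hfin x) hy hd
    have := mul_le_mul_of_nonneg_right (hN x) (dist_nonneg (x := x) (y := y))
    linarith

lemma re_lipOn {Y K : Set X} {c : X → ℝ≥0∞} {δ : ℝ} {N : ℝ≥0} (hc : ∀ x, c x ≤ N) (hδ : 0 < δ) :
    LocLipOn (fun x => (re Y K c δ x).toReal) Y := by
  intro x hx
  refine ⟨δ / 2, by positivity, N, ?_⟩
  rw [lipschitzOnWith_iff_dist_le_mul]
  intro y hy z hz
  rw [Real.dist_eq]
  refine re_lip hc hy.1 hz.1 ?_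
  have h1 := mem_ball.1 hy.2
  have h2 := mem_ball'.1 hz.2
  linarith [dist_triangle y x z]

lemma LocLipOn.continuousOn {A : Set X} {v : X → ℝ} (hv : LocLipOn v A) : ContinuousOn v A := by
  intro x hx
  obtain ⟨r, hr, K, hK⟩ := hv x hx
  have := hK.continuousOn x ⟨hx, mem_ball_self hr⟩
  rwa [continuousWithinAt_inter (ball_mem_nhds x hr)] at this

lemma re_meas {Y K : Set X} {c : X → ℝ≥0∞} {δ : ℝ} {N : ℝ≥0} (hc : ∀ x, c x ≤ N) (hδ : 0 < δ)
    (hKY : K ⊆ Y) (hY : MeasurableSet Y) : Measurable (re Y K c δ) := by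
  have h1 : ContinuousOn (fun x => (re Y K c δ x).toReal) Y := (re_lipOn hc hδ).continuousOn
  have h2 : Measurable (fun x => (re Y K c δ x).toReal) := by
    classical
    have h3 := ContinuousOn.measurable_piecewise (s := Y) (g := fun _ => (0 : ℝ)) h1 continuousOn_const hY
    convert h3 using 1
    ext x
    by_cases hx : x ∈ Y
    · simp [hx]
    · simp [hx, re_of_notMem hKY hx]
  have h3 := h2.ennreal_ofReal
  convert h3 using 1
  ext x
  rw [ENNReal.ofReal_toReal (re_ne_top _ _ _ _ _)]

lemma abs_deriv_le_of_onesided {φ : ℝ → ℝ} {D C t : ℝ} (h : HasDerivAt φ D t)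
    (hC : ∀ᶠ s in 𝓝 t, φ t - φ s ≤ C * |s - t|) : |D| ≤ C := by
  rw [hasDerivAt_iff_tendsto_slope] at h
  rw [abs_le]
  constructor
  · have h1 : Tendsto (slope φ t) (𝓝[>] t) (𝓝 D) :=
      h.mono_left (nhdsWithin_mono _ fun x (hx : t < x) => hx.ne')
    refine ge_of_tendsto h1 ?_
    filter_upwards [nhdsWithin_le_nhds hC, self_mem_nhdsWithin] with s hs hst
    have hst' : 0 < s - t := sub_pos.2 hst
    rw [slope_def_field, le_div_iff₀ hst']
    rw [abs_of_pos hst'] at hs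
    linarith
  · have h1 : Tendsto (slope φ t) (𝓝[<] t) (𝓝 D) :=
      h.mono_left (nhdsWithin_mono _ fun x (hx : x < t) => hx.ne)
    refine le_of_tendsto h1 ?_
    filter_upwards [nhdsWithin_le_nhds hC, self_mem_nhdsWithin] with s hs hst
    have hst' : 0 < t - s := sub_pos.2 hst
    rw [slope_comm, slope_def_field, div_le_iff₀ hst']
    rw [abs_of_neg (by linarith)] at hs
    linarith

lemma re_deriv {Y K : Set X} {c : X → ℝ≥0∞} {δ : ℝ} (hc : ∀ x, c x ≠ ∞) (hδ : 0 < δ)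
    {B : Set X} (hB : IsOpen B) (hBY : B ⊆ Y) (γ : Curve X) {t : ℝ} (ht : t ∈ Ioo 0 γ.len)
    (htB : γ.toFun t ∈ B) {D : ℝ}
    (hD : HasDerivAt (fun s => (re Y K c δ (γ.toFun s)).toReal) D t) :
    ENNReal.ofReal |D| ≤ c (γ.toFun t) := by
  rw [← ENNReal.ofReal_toReal (hc (γ.toFun t))]
  apply ENNReal.ofReal_le_ofReal
  apply abs_deriv_le_of_onesided hD
  obtain ⟨p, q, hp, hpt, htq, hq, hin⟩ := γ.exists_interval hB ht htB
  filter_upwards [Icc_mem_nhds hpt htq, ball_mem_nhds t hδ] with s hs hsδ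
  have hdist : dist (γ.toFun t) (γ.toFun s) ≤ |s - t| := by
    have := γ.lip.dist_le_mul t (Ioo_subset_Icc_self ht) s ⟨hp.trans hs.1, hs.2.trans hq⟩
    rw [Real.dist_eq, abs_sub_comm] at this
    simpa using this
  have hlt : |s - t| < δ := by rwa [mem_ball, Real.dist_eq] at hsδ
  refine (re_real (hc _) (hBY (hin s hs)) (hdist.trans hlt.le)).trans ?_
  gcongr

lemma Reach.stepfun {Y K : Set X} {c : X → ℝ≥0∞} {δ : ℝ} (hδ : 0 ≤ δ) (hKY : K ⊆ Y) {x : X}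
    {a : ℝ≥0∞} (h : Reach Y K c δ x a) :
    ∃ L : ℝ, ∃ γ : ℝ → X, 0 ≤ L ∧ Measurable γ ∧ γ 0 ∈ K ∧ (∀ t, L ≤ t → γ t = x) ∧ (∀ t, γ t ∈ Y) ∧
      (∀ s t, s ≤ t → dist (γ s) (γ t) ≤ (t - s) + δ) ∧ ∫⁻ t in Ico 0 L, c (γ t) ≤ a := by
  induction h with
  | @base x a hx =>
    refine ⟨0, fun _ => x, le_rfl, measurable_const, hx, fun _ _ => rfl, fun _ => hKY hx, ?_, by simp⟩
    intro s t hst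
    simp only [dist_self]; linarith
  | @step x y a b hr hy hd hab ih =>
    obtain ⟨L, γ, hL, hm, h0, hend, hin, hdist, hint⟩ := ih
    set d := dist x y with hdd
    have hd0 : 0 ≤ d := dist_nonneg
    refine ⟨L + d, fun t => if t < L + d then γ t else y, by positivity, ?_, ?_, ?_, ?_, ?_, ?_⟩
    · exact Measurable.ite measurableSet_Iio hm measurable_const
    · by_cases hpos : 0 < L + d
      · simp only [hpos, if_true]; exact h0
      · simp only [hpos, if_false]
        have hL0 : L ≤ 0 := by linarith
        have hd1 : dist x y = 0 := by linarith
        rw [← dist_eq_zero.1 hd1, ← hend 0 hL0]; exact h0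
    · intro t ht
      simp [not_lt.2 ht]
    · intro t
      dsimp only
      split_ifs
      · exact hin t
      · exact hy
    · intro s t hst
      dsimp only
      by_cases ht : t < L + d
      · rw [if_pos ht, if_pos (hst.trans_lt ht)]; exact hdist s t hst
      · rw [if_neg ht]
        push Not at ht
        by_cases hs : s < L + d
        · rw [if_pos hs]
          by_cases hsL : s < L
          · have h1 := hdist s L hsL.le
            rw [hend L le_rfl] at h1
            linarith [dist_triangle (γ s) x y]
          · rw [hend s (not_lt.1 hsL)]
            linarith
        · rw [if_neg hs, dist_self]; linarith
    · refine le_trans ?_ hab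
      have hsplit : Ico 0 (L + d) = Ico 0 L ∪ Ico L (L + d) :=
        (Ico_union_Ico_eq_Ico hL (by linarith)).symm
      rw [hsplit]
      refine (lintegral_union_le _ _ _).trans (add_le_add ?_ ?_)
      · refine le_trans (le_of_eq ?_) hint
        apply setLIntegral_congr_fun measurableSet_Ico
        intro t ht
        dsimp only
        rw [if_pos (by linarith [ht.2])]
      · have : ∫⁻ t in Ico L (L + d), c (if t < L + d then γ t else y) =
            ∫⁻ t in Ico L (L + d), c x := by
          apply setLIntegral_congr_fun measurableSet_Ico
          intro t ht
          dsimp only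
          rw [if_pos ht.2, hend t ht.1]
        rw [this]
        simp

lemma exists_curve_of_reach {Y K : Set X} (hY : IsCompact Y) (hK : IsClosed K) (hKY : K ⊆ Y)
    {gh : X → ℝ≥0∞} (hlsc : LowerSemicontinuous gh) (hpos : ∀ x, 0 < gh x) {x : X} {a : ℝ≥0∞}
    (ha : a ≠ ∞)
    (h : ∀ j : ℕ, Reach Y K (fun y => min (gh y) (j + 1)) (1 / (j + 1 : ℝ)) x a) :
    ∃ γ : Curve X, γ.toFun 0 ∈ K ∧ γ.toFun γ.len = x ∧ γ.integral gh ≤ a := by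
  have hxY : x ∈ Y := (h 0).mem hKY
  have hghm : Measurable gh := hlsc.measurable
  obtain ⟨κ, hκ0, hκt, hκ⟩ : ∃ κ : ℝ≥0∞, κ ≠ 0 ∧ κ ≠ ∞ ∧ ∀ y ∈ Y, κ ≤ gh y ∧ κ ≤ 1 := by
    obtain ⟨y, hy, hmin⟩ := LowerSemicontinuousOn.exists_isMinOn ⟨x, hxY⟩ hY
      (hlsc.lowerSemicontinuousOn Y)
    refine ⟨min (gh y) 1, ?_, ?_, fun z hz => ⟨(min_le_left _ _).trans (hmin hz), min_le_right _ _⟩⟩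
    · exact (lt_min (hpos y) one_pos).ne'
    · exact ne_top_of_le_ne_top ENNReal.one_ne_top (min_le_right _ _)
  have hδ : ∀ j : ℕ, (0 : ℝ) ≤ 1 / (j + 1 : ℝ) := fun j => by positivity
  choose L γ hL hm h0 hend hin hdist hint using fun j => (h j).stepfun (hδ j) hKY
  set M := (a / κ).toReal with hM
  have hLM : ∀ j, L j ≤ M := by
    intro j
    have h1 : κ * ENNReal.ofReal (L j) ≤ a := by
      refine le_trans ?_ (hint j)
      calc κ * ENNReal.ofReal (L j) = ∫⁻ t in Ico 0 (L j), κ := by simp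
        _ ≤ _ := by
          apply lintegral_mono
          intro t
          refine le_min (hκ _ (hin j t)).1 ((hκ _ (hin j t)).2.trans ?_)
          exact le_add_self
    rw [mul_comm, ← ENNReal.le_div_iff_mul_le (.inl hκ0) (.inl hκt)] at h1
    rw [hM]
    exact (ENNReal.ofReal_le_iff_le_toReal (ENNReal.div_ne_top ha hκ0)).1 h1
  let 𝒰 : Ultrafilter ℕ := hyperfilter ℕ
  have h𝒰 : (𝒰 : Filter ℕ) ≤ atTop := Nat.hyperfilter_le_atTop
  have hlim : ∀ t : ℝ, ∃ y ∈ Y, Tendsto (fun j => γ j t) 𝒰 (𝓝 y) := by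
    intro t
    obtain ⟨y, hy, hle⟩ := hY.ultrafilter_le_nhds (𝒰.map (fun j => γ j t)) (by
      rw [le_principal_iff]
      exact Filter.univ_mem' (f := (𝒰 : Filter ℕ)) fun j => hin j t)
    exact ⟨y, hy, hle⟩
  choose Γ hΓY hΓ using hlim
  obtain ⟨ℓ, hℓ, hℓlim⟩ : ∃ ℓ ∈ Icc 0 M, Tendsto L 𝒰 (𝓝 ℓ) := by
    obtain ⟨y, hy, hle⟩ := (isCompact_Icc (a := (0 : ℝ)) (b := M)).ultrafilter_le_nhds (𝒰.map L) (by
      rw [le_principal_iff]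
      exact Filter.univ_mem' (f := (𝒰 : Filter ℕ)) fun j => ⟨hL j, hLM j⟩)
    exact ⟨y, hy, hle⟩
  have hδlim : Tendsto (fun j : ℕ => 1 / (j + 1 : ℝ)) 𝒰 (𝓝 0) :=
    tendsto_one_div_add_atTop_nhds_zero_nat.mono_left h𝒰
  have hΓlip : ∀ s t, s ≤ t → dist (Γ s) (Γ t) ≤ t - s := by
    intro s t hst
    have h1 : Tendsto (fun j => dist (γ j s) (γ j t)) 𝒰 (𝓝 (dist (Γ s) (Γ t))) := (hΓ s).dist (hΓ t)
    have h2 : Tendsto (fun j : ℕ => (t - s) + 1 / (j + 1 : ℝ)) 𝒰 (𝓝 ((t - s) + 0)) :=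
      tendsto_const_nhds.add hδlim
    rw [add_zero] at h2
    exact le_of_tendsto_of_tendsto' h1 h2 fun j => hdist j s t hst
  have hΓ0 : Γ 0 ∈ K := hK.mem_of_tendsto (hΓ 0) (Eventually.of_forall h0)
  have hΓℓ : Γ ℓ = x := by
    have h1 : Tendsto (fun j => dist (γ j ℓ) x) 𝒰 (𝓝 (dist (Γ ℓ) x)) := (hΓ ℓ).dist tendsto_const_nhds
    have h2 : Tendsto (fun j : ℕ => |L j - ℓ| + 1 / (j + 1 : ℝ)) 𝒰 (𝓝 (|ℓ - ℓ| + 0)) :=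
      (hℓlim.sub tendsto_const_nhds).abs.add hδlim
    have h3 := le_of_tendsto_of_tendsto' h1 h2 (fun j => by
      have h4 := hdist j ℓ (max ℓ (L j)) (le_max_left _ _)
      rw [hend j _ (le_max_right _ _)] at h4
      refine h4.trans ?_
      gcongr
      rcases le_total ℓ (L j) with h | h
      · rw [max_eq_right h]; exact le_abs_self _
      · rw [max_eq_left h]; simp)
    simp only [sub_self, abs_zero, add_zero] at h3
    exact dist_le_zero.1 h3
  -- subsequence
  have hsub : ∀ m : ℕ, ∃ j : ℕ, m ≤ j ∧ |L j - ℓ| < 1 / (m + 1 : ℝ) ∧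
      ∀ i ∈ Finset.range (m * m + 1), dist (γ j (i / (m + 1 : ℝ))) (Γ (i / (m + 1 : ℝ))) < 1 / (m + 1 : ℝ) := by
    intro m
    have hp : (0 : ℝ) < 1 / (m + 1 : ℝ) := by positivity
    have e1 : ∀ᶠ j in (𝒰 : Filter ℕ), m ≤ j := h𝒰 (eventually_ge_atTop m)
    have e2 : ∀ᶠ j in (𝒰 : Filter ℕ), |L j - ℓ| < 1 / (m + 1 : ℝ) := by
      have := hℓlim.eventually (ball_mem_nhds ℓ hp)
      simpa only [mem_ball, Real.dist_eq] using this
    have e3 : ∀ᶠ j in (𝒰 : Filter ℕ), ∀ i ∈ Finset.range (m * m + 1),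
        dist (γ j (i / (m + 1 : ℝ))) (Γ (i / (m + 1 : ℝ))) < 1 / (m + 1 : ℝ) := by
      rw [Filter.eventually_all_finset]
      intro i _
      exact (hΓ _).eventually (ball_mem_nhds _ hp)
    obtain ⟨j, h1, h2, h3⟩ := (e1.and (e2.and e3)).exists
    exact ⟨j, h1, h2, h3⟩
  choose φ hφ1 hφ2 hφ3 using hsub
  have hm0 : Tendsto (fun m : ℕ => 1 / (m + 1 : ℝ)) atTop (𝓝 0) := tendsto_one_div_add_atTop_nhds_zero_nat
  have hLφ : Tendsto (fun m => L (φ m)) atTop (𝓝 ℓ) := by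
    rw [tendsto_iff_dist_tendsto_zero]
    exact squeeze_zero (fun _ => dist_nonneg) (fun m => by rw [Real.dist_eq]; exact (hφ2 m).le) hm0
  have hγφ : ∀ t, 0 ≤ t → Tendsto (fun m => γ (φ m) t) atTop (𝓝 (Γ t)) := by
    intro t ht
    rw [tendsto_iff_dist_tendsto_zero]
    have h4 : Tendsto (fun m : ℕ => 4 * (1 / (m + 1 : ℝ))) atTop (𝓝 (4 * 0)) := hm0.const_mul 4
    rw [mul_zero] at h4
    refine squeeze_zero' (Eventually.of_forall fun _ => dist_nonneg) ?_ h4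
    filter_upwards [eventually_ge_atTop (⌈2 * t⌉₊ + 1)] with m hm
    have hm1 : (1 : ℝ) ≤ m := by exact_mod_cast (by omega : 1 ≤ m)
    have hm2 : 2 * t ≤ m := by
      refine (Nat.le_ceil (2 * t)).trans ?_
      exact_mod_cast (by omega : ⌈2 * t⌉₊ ≤ m)
    have hmp : (0 : ℝ) < m + 1 := by positivity
    set i := ⌊t * (m + 1)⌋₊ with hi
    have hi1 : (i : ℝ) ≤ t * (m + 1) := Nat.floor_le (by positivity)
    have hi2 : t * (m + 1) < i + 1 := Nat.lt_floor_add_one _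
    have hir : i ∈ Finset.range (m * m + 1) := by
      rw [Finset.mem_range, Nat.lt_add_one_iff]
      have : (i : ℝ) ≤ m * m := by nlinarith
      exact_mod_cast this
    set q : ℝ := i / (m + 1 : ℝ) with hq
    have hqt : q ≤ t := by rw [hq, div_le_iff₀ hmp]; exact hi1
    have hqt2 : t - q ≤ 1 / (m + 1 : ℝ) := by
      rw [hq, sub_le_iff_le_add, ← add_div, le_div_iff₀ hmp]; linarith
    have d1 := hφ3 m i hir
    have d2 := hdist (φ m) q t hqt
    have d3 := hΓlip q t hqt
    have d4 : 1 / (φ m + 1 : ℝ) ≤ 1 / (m + 1 : ℝ) := by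
      have : (m : ℝ) ≤ φ m := by exact_mod_cast hφ1 m
      gcongr
    have d5 := dist_triangle4 (γ (φ m) t) (γ (φ m) q) (Γ q) (Γ t)
    change dist (γ (φ m) q) (Γ q) < _ at d1
    rw [dist_comm (γ (φ m) t) (γ (φ m) q)] at d5
    linarith
  refine ⟨⟨ℓ, hℓ.1, Γ, ?_⟩, hΓ0, hΓℓ, ?_⟩
  · rw [lipschitzOnWith_iff_dist_le_mul]
    intro s _ t _
    rw [Real.dist_eq, NNReal.coe_one, one_mul]
    rcases le_total s t with hst | hst
    · rw [abs_sub_comm]; exact (hΓlip s t hst).trans (le_abs_self _)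
    · rw [dist_comm]; exact (hΓlip t s hst).trans (le_abs_self _)
  · unfold Curve.integral
    simp only
    rw [← setLIntegral_congr Ico_ae_eq_Icc, ← lintegral_indicator measurableSet_Ico]
    set F : ℕ → ℝ → ℝ≥0∞ := fun m =>
      (Ico 0 (L (φ m))).indicator (fun t => min (gh (γ (φ m) t)) ((φ m : ℕ) + 1)) with hF
    have hFm : ∀ m, Measurable (F m) := fun m =>
      ((hghm.comp (hm (φ m))).min measurable_const).indicator measurableSet_Ico
    calc ∫⁻ t, (Ico 0 ℓ).indicator (fun t => gh (Γ t)) t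
        ≤ ∫⁻ t, liminf (fun m => F m t) atTop := by
          apply lintegral_mono
          intro t
          by_cases ht : t ∈ Ico 0 ℓ
          · simp only [indicator_of_mem ht]
            refine le_of_forall_lt fun y hy => ?_
            obtain ⟨y', hy1, hy2⟩ := exists_between hy
            refine lt_of_lt_of_le hy1 ?_
            apply le_liminf_of_le (by isBoundedDefault)
            have e1 := (hγφ t ht.1).eventually (hlsc (Γ t) y' hy2)
            have e2 := hLφ.eventually_const_lt ht.2
            obtain ⟨n, hn⟩ := ENNReal.exists_nat_gt (ne_top_of_lt hy2)
            filter_upwards [e1, e2, eventually_ge_atTop n] with m he1 he2 he3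
            simp only [hF]
            have hmem : t ∈ Ico 0 (L (φ m)) := ⟨ht.1, he2⟩
            rw [indicator_of_mem hmem]
            refine le_min he1.le (hn.le.trans ?_)
            have : (n : ℝ≥0∞) ≤ (φ m : ℕ) := by exact_mod_cast he3.trans (hφ1 m)
            exact this.trans le_self_add
          · simp [ht]
      _ ≤ liminf (fun m => ∫⁻ t, F m t) atTop := lintegral_liminf_le hFm
      _ ≤ liminf (fun _ : ℕ => a) atTop := by
          refine liminf_le_liminf (Eventually.of_forall fun m => ?_)
          simp only [hF]
          rw [lintegral_indicator measurableSet_Ico]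
          exact hint (φ m)
      _ = a := liminf_const a


lemma exists_ug_of_capa [ProperSpace X] {μ : Measure X} [IsLocallyFiniteMeasure μ] {G : Set X}
    {ε : ℝ≥0∞} (h0 : ε ≠ 0) (hε : ε ≠ ∞) (h : capa1 μ G < ε) :
    ∃ (u : X → ℝ) (gh : X → ℝ≥0∞), (∀ x ∈ G, 1 ≤ u x) ∧ ∫⁻ x, ENNReal.ofReal |u x| ∂μ ≤ ε ∧
      LowerSemicontinuous gh ∧ (∀ x, 0 < gh x) ∧ ∫⁻ x, gh x ∂μ ≤ 4 * ε ∧ ∀ γ, UGIneq u gh γ := by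
  unfold capa1 at h
  simp only [iInf_lt_iff] at h
  obtain ⟨u, -, hu1, hN⟩ := h
  unfold NNorm at hN
  simp only [Measure.restrict_univ] at hN
  set a := ∫⁻ x, ENNReal.ofReal |u x| ∂μ with ha
  have hN2 := lt_tsub_iff_left.2 hN
  simp only [iInf_lt_iff] at hN2
  obtain ⟨g, ⟨hgm, ρ, hρm, hρfin, hρ⟩, hg⟩ := hN2
  have hg' : ∫⁻ x, g x ∂μ ≤ ε := hg.le.trans tsub_le_self
  have haε : a ≤ ε := le_self_add.trans hN.le
  set Z := toMeasurable μ {x | g x ≠ hgm.mk g x} with hZ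
  have hZm : MeasurableSet Z := measurableSet_toMeasurable _ _
  have hZ0 : μ Z = 0 := by rw [hZ, measure_toMeasurable]; exact hgm.ae_eq_mk
  obtain ⟨θ, hθ0, hθm, hθ⟩ := exists_pos_lintegral_lt_of_sigmaFinite μ h0
  set κ := ε / (1 + ∫⁻ x, ρ x ∂μ) with hκ
  have hden : 1 + ∫⁻ x, ρ x ∂μ ≠ ∞ := by finiteness [hρfin.ne]
  have hκ0 : κ ≠ 0 := ENNReal.div_ne_zero.2 ⟨h0, hden⟩
  have hκρ : κ * ∫⁻ x, ρ x ∂μ ≤ ε := by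
    calc κ * ∫⁻ x, ρ x ∂μ ≤ κ * (1 + ∫⁻ x, ρ x ∂μ) := by gcongr; exact le_add_self
      _ = ε := ENNReal.div_mul_cancel (by simp) hden
  set g1 : X → ℝ≥0∞ := fun x => (hgm.mk g x + κ * ρ x) + (Z.indicator (fun _ => ∞) x + θ x) with hg1
  have hg1m : Measurable g1 := (hgm.measurable_mk.add (hρm.const_mul κ)).add
    ((measurable_const.indicator hZm).add hθm.coe_nnreal_ennreal)
  have hg1i : ∫⁻ x, g1 x ∂μ ≤ 3 * ε := by
    have hmm : Measurable fun x => hgm.mk g x + κ * ρ x := hgm.measurable_mk.add (hρm.const_mul κ)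
    simp only [hg1]
    rw [lintegral_add_left hmm,
      lintegral_add_left hgm.measurable_mk, lintegral_add_left (measurable_const.indicator hZm),
      lintegral_const_mul _ hρm, lintegral_indicator hZm, ← lintegral_congr_ae hgm.ae_eq_mk]
    simp only [lintegral_const, Measure.restrict_apply_univ, hZ0, mul_zero, zero_add]
    calc _ ≤ (ε + ε) + ε := by gcongr
      _ = 3 * ε := by ring
  obtain ⟨gh, hle, hlsc, hint⟩ := exists_le_lowerSemicontinuous_lintegral_ge μ g1 hg1m h0
  refine ⟨u, gh, hu1, haε, hlsc, fun x => ?_, ?_, fun γ => ?_⟩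
  · refine lt_of_lt_of_le ?_ (hle x)
    have : (0 : ℝ≥0∞) < θ x := by exact_mod_cast hθ0 x
    refine this.trans_le ?_
    exact (le_add_self (a := (θ x : ℝ≥0∞))).trans le_add_self
  · calc _ ≤ 3 * ε + ε := hint.trans (by gcongr)
      _ = 4 * ε := by ring
  · by_cases h1 : γ.integral ρ = ∞
    · unfold UGIneq
      have : κ * γ.integral ρ ≤ γ.integral gh := by
        unfold Curve.integral
        refine (lintegral_const_mul_le κ _).trans (lintegral_mono fun t => ?_)
        refine le_trans ?_ (hle _)
        exact (le_add_self (a := κ * ρ (γ.toFun t))).trans le_self_add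
      rw [h1, ENNReal.mul_top hκ0] at this
      exact le_top.trans this
    by_cases h2 : γ.integral (Z.indicator (fun _ => ∞)) < ∞
    · have h3 : UGIneq u g γ := by
        by_contra h3
        exact h1 (hρ γ ⟨fun _ _ => mem_univ _, h3⟩)
      refine h3.trans ?_
      unfold Curve.integral
      apply lintegral_mono_ae
      rw [ae_restrict_iff' measurableSet_Icc]
      filter_upwards [Curve.ae_notMem hZm h2] with t ht htI
      have h4 : g (γ.toFun t) = hgm.mk g (γ.toFun t) := by
        by_contra h5
        exact ht htI (subset_toMeasurable μ _ h5)
      rw [h4]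
      refine le_trans ?_ (hle _)
      exact (le_self_add (b := κ * ρ (γ.toFun t))).trans le_self_add
    · unfold UGIneq
      push Not at h2
      refine le_top.trans (h2.trans (Curve.integral_mono fun x => ?_))
      refine le_trans ?_ (hle _)
      exact (le_self_add (b := (θ x : ℝ≥0∞))).trans le_add_self

/-- cutoff data -/
structure Cut (μ : Measure X) (x₀ : X) (G : Set X) (ε : ℝ≥0∞) (û : X → ℝ) (gh : X → ℝ≥0∞) : Prop where
  um : Measurable û
  uI : ∀ x, û x ∈ Icc (0 : ℝ) 1
  u1 : ∀ x ∈ G, û x = 1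
  uint : ∫⁻ x, ENNReal.ofReal (û x) ∂μ ≤ ε
  gm : Measurable gh
  gint : ∫⁻ x, gh x ∂μ ≤ 4 * ε
  approx : ∀ (R : ℝ) (K : Set X), IsCompact K → K ⊆ G → ∀ ν : Measure X, IsFiniteMeasure ν →
    ∀ τ : ℝ≥0∞, 0 < τ → ∃ η : X → ℝ, Measurable η ∧ (∀ x, η x ∈ Icc (0 : ℝ) 1) ∧
      LocLipOn η (ball x₀ R) ∧ (∀ x ∈ K ∩ ball x₀ R, η x = 1) ∧
      (∀ (γ : Curve X) (t : ℝ), t ∈ Ioo 0 γ.len → γ.toFun t ∈ ball x₀ R → ∀ D : ℝ,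
        HasDerivAt (fun s => η (γ.toFun s)) D t → ENNReal.ofReal |D| ≤ gh (γ.toFun t)) ∧
      ∫⁻ x, ENNReal.ofReal |η x - û x| ∂ν < τ

lemma lint_tendsto {ν : Measure X} [IsFiniteMeasure ν] {f : ℕ → X → ℝ≥0∞} {F : X → ℝ≥0∞}
    (hf : ∀ n, Measurable (f n)) (hF : Measurable F) (hf1 : ∀ n x, f n x ≤ 1) (hF1 : ∀ x, F x ≤ 1)
    (hlim : ∀ x, Tendsto (fun n => f n x) atTop (𝓝 (F x))) :
    Tendsto (fun n => ∫⁻ x, ENNReal.ofReal |(f n x).toReal - (F x).toReal| ∂ν) atTop (𝓝 0) := by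
  have hFt : ∀ x, F x ≠ ∞ := fun x => ne_top_of_le_ne_top ENNReal.one_ne_top (hF1 x)
  have hft : ∀ n x, f n x ≠ ∞ := fun n x => ne_top_of_le_ne_top ENNReal.one_ne_top (hf1 n x)
  have h1 : ∀ a : ℝ≥0∞, a ≤ 1 → a.toReal ≤ 1 := fun a ha => by
    simpa using ENNReal.toReal_mono ENNReal.one_ne_top ha
  have := tendsto_lintegral_of_dominated_convergence (μ := ν)
    (F := fun n x => ENNReal.ofReal |(f n x).toReal - (F x).toReal|) (f := fun _ => 0)
    (fun _ => 1) (fun n => ?_) (fun n => ?_) ?_ ?_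
  · simpa using this
  · exact ((hf n).ennreal_toReal.sub hF.ennreal_toReal).abs.ennreal_ofReal
  · refine Eventually.of_forall fun x => ?_
    rw [← ENNReal.ofReal_one]
    apply ENNReal.ofReal_le_ofReal
    rw [abs_le]
    have a1 := h1 _ (hf1 n x)
    have a2 := h1 _ (hF1 x)
    have a3 : 0 ≤ (f n x).toReal := ENNReal.toReal_nonneg
    have a4 : 0 ≤ (F x).toReal := ENNReal.toReal_nonneg
    constructor <;> linarith
  · simp
  · refine Eventually.of_forall fun x => ?_
    have h2 : Tendsto (fun n => (f n x).toReal) atTop (𝓝 (F x).toReal) :=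
      (ENNReal.tendsto_toReal (hFt x)).comp (hlim x)
    have h3 := ENNReal.tendsto_ofReal (h2.sub_const (F x).toReal).abs
    simpa using h3

lemma exists_cut [ProperSpace X] {μ : Measure X} [IsLocallyFiniteMeasure μ] {G : Set X} (x₀ : X)
    (hG : IsOpen G) {ε : ℝ≥0∞} (h0 : ε ≠ 0) (hε : ε ≠ ∞) (h : capa1 μ G < ε) :
    ∃ û gh, Cut μ x₀ G ε û gh := by
  obtain ⟨u, gh, hu1, hui, hlsc, hpos, hgi, hUG⟩ := exists_ug_of_capa h0 hε h
  have hghm : Measurable gh := hlsc.measurable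
  set Y : ℕ → Set X := fun n => closedBall x₀ n with hY
  set K : ℕ → Set X := fun n => Y n ∩ {x | ((n : ℝ≥0∞) + 1)⁻¹ ≤ infEDist x Gᶜ} with hK
  set e : ℕ → ℕ → X → ℝ≥0∞ := fun n j =>
    re (Y n) (K n) (fun y => min (gh y) (j + 1)) (1 / (j + 1 : ℝ)) with he
  have hKY : ∀ n, K n ⊆ Y n := fun n => inter_subset_left
  have hYc : ∀ n, IsCompact (Y n) := fun n => isCompact_closedBall _ _
  have hKc : ∀ n, IsClosed (K n) := fun n => isClosed_closedBall.inter
    (isClosed_le continuous_const continuous_infEDist)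
  have hKG : ∀ n, K n ⊆ G := by
    intro n x hx
    by_contra hxG
    have : infEDist x Gᶜ = 0 := infEDist_zero_of_mem hxG
    have h2 := hx.2
    rw [mem_ofPred_eq, this] at h2
    simp at h2
  have hcN : ∀ (j : ℕ) (x : X), min (gh x) ((j : ℝ≥0∞) + 1) ≤ ((j + 1 : ℕ) : ℝ≥0) := by
    intro j x
    refine (min_le_right _ _).trans ?_
    push_cast; exact le_rfl
  have hδ : ∀ j : ℕ, (0 : ℝ) < 1 / (j + 1 : ℝ) := fun j => by positivity
  have hem : ∀ n j, Measurable (e n j) := fun n j =>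
    re_meas (hcN j) (hδ j) (hKY n) (hYc n).measurableSet
  have he1 : ∀ n j x, e n j x ≤ 1 := fun n j x => re_le_one _ _ _ _ _
  have hanti : ∀ n x, Antitone fun j => e n j x := by
    intro n x i j hij
    have hr : (i : ℝ) ≤ j := by exact_mod_cast hij
    have hr2 : (i : ℝ≥0∞) ≤ j := by exact_mod_cast hij
    refine re_mono subset_rfl subset_rfl (fun y => ?_) ?_ x
    · gcongr
    · gcongr
  have hmono : ∀ j x, Monotone fun n => e n j x := by
    intro j x m n hmn
    have hr : (m : ℝ) ≤ n := by exact_mod_cast hmn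
    have hr2 : (m : ℝ≥0∞) ≤ n := by exact_mod_cast hmn
    have hYY : Y m ⊆ Y n := closedBall_subset_closedBall hr
    refine re_mono hYY (inter_subset_inter hYY fun y hy => ?_) (fun y => le_rfl) le_rfl x
    rw [mem_ofPred_eq] at hy ⊢
    refine le_trans ?_ hy
    gcongr
  set f : ℕ → X → ℝ≥0∞ := fun n x => ⨅ j, e n j x with hf
  have hfm : ∀ n, Measurable (f n) := fun n => Measurable.iInf (hem n)
  have hf1 : ∀ n x, f n x ≤ 1 := fun n x => (iInf_le _ 0).trans (he1 n 0 x)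
  have hfmono : ∀ x, Monotone fun n => f n x := fun x m n hmn => iInf_mono fun j => hmono j x hmn
  set F : X → ℝ≥0∞ := fun x => ⨆ n, f n x with hFdef
  have hFm : Measurable F := Measurable.iSup hfm
  have hF1 : ∀ x, F x ≤ 1 := fun x => iSup_le fun n => hf1 n x
  have hFt : ∀ x, F x ≠ ∞ := fun x => ne_top_of_le_ne_top ENNReal.one_ne_top (hF1 x)
  have hfu : ∀ n x, f n x ≤ ENNReal.ofReal |u x| := by
    intro n x
    by_contra hlt
    push Not at hlt
    obtain ⟨b, hb1, hb2⟩ := exists_between hlt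
    have hb3 : b < 1 := hb2.trans_le (hf1 n x)
    have hreach : ∀ j : ℕ, Reach (Y n) (K n) (fun y => min (gh y) (j + 1)) (1 / (j + 1 : ℝ)) x (1 - b) := by
      intro j
      have h1 : b < e n j x := hb2.trans_le (iInf_le _ j)
      have h2 : rf (Y n) (K n) (fun y => min (gh y) (j + 1)) (1 / (j + 1 : ℝ)) x < 1 - b := by
        have h3 := lt_tsub_iff_left.1 (show b < 1 - rf (Y n) (K n) (fun y => min (gh y) (j + 1)) (1 / (j + 1 : ℝ)) x from h1)
        exact lt_tsub_iff_right.2 h3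
      obtain ⟨c, hc1, hc2⟩ := sInf_lt_iff.1 h2
      exact Reach.up hc1 hc2.le
    obtain ⟨γ, hγ0, hγ1, hγi⟩ := exists_curve_of_reach (hYc n) (hKc n) (hKY n) hlsc hpos
      (by finiteness) hreach
    have h1 := hu1 _ (hKG n hγ0)
    have h2 := (hUG γ).trans hγi
    rw [hγ1] at h2
    have h3 : (1 : ℝ≥0∞) ≤ ENNReal.ofReal |u x| + ENNReal.ofReal |u (γ.toFun 0) - u x| := by
      rw [← ENNReal.ofReal_add (abs_nonneg _) (abs_nonneg _), ← ENNReal.ofReal_one]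
      apply ENNReal.ofReal_le_ofReal
      linarith [le_abs_self (u x), le_abs_self (u (γ.toFun 0) - u x)]
    have h4 : (1 : ℝ≥0∞) < b + (1 - b) := by
      refine h3.trans_lt ?_
      exact ENNReal.add_lt_add_of_lt_of_le (by finiteness) hb1 h2
    rw [add_tsub_cancel_of_le hb3.le] at h4
    exact lt_irrefl _ h4
  have heK : ∀ n j x, x ∈ K n → e n j x = 1 := fun n j x hx => re_of_mem hx
  have htr : ∀ {a : ℝ≥0∞}, a ≤ 1 → a.toReal ∈ Icc (0 : ℝ) 1 := fun {a} ha =>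
    ⟨ENNReal.toReal_nonneg, by simpa using ENNReal.toReal_mono ENNReal.one_ne_top ha⟩
  refine ⟨fun x => (F x).toReal, gh, hFm.ennreal_toReal, fun x => htr (hF1 x), ?_, ?_, hghm, hgi, ?_⟩
  · intro x hx
    have h1 : infEDist x Gᶜ ≠ 0 := by
      intro h2
      have h3 := mem_closure_iff_infEDist_zero.2 h2
      rw [hG.isClosed_compl.closure_eq] at h3
      exact h3 hx
    have : F x = 1 := by
      refine le_antisymm (hF1 x) ?_
      obtain ⟨n, hn⟩ := ENNReal.exists_inv_nat_lt h1
      obtain ⟨m, hm⟩ := exists_nat_ge (dist x x₀)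
      have : x ∈ K (max n m) := by
        refine ⟨mem_closedBall.2 (hm.trans (by exact_mod_cast le_max_right n m)), ?_⟩
        refine le_trans ?_ hn.le
        rw [ENNReal.inv_le_inv]
        refine le_trans ?_ le_self_add
        exact_mod_cast le_max_left n m
      refine le_trans ?_ (le_iSup _ (max n m))
      exact le_iInf fun j => (heK _ j x this).ge
    simp [this]
  · refine le_trans (lintegral_mono fun x => ?_) hui
    rw [ENNReal.ofReal_toReal (hFt x)]
    exact iSup_le fun n => hfu n x
  · intro R C hC hCG ν hν τ hτ
    obtain ⟨r, hr, hrG⟩ := hC.exists_thickening_subset_open hG hCG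
    obtain ⟨N0, hN0⟩ := exists_nat_ge R
    obtain ⟨N1, hN1⟩ := ENNReal.exists_inv_nat_lt (ENNReal.ofReal_pos.2 hr).ne'
    have hτ2 : 0 < τ / 2 := ENNReal.half_pos hτ.ne'
    have l1 := lint_tendsto (ν := ν) hfm hFm hf1 hF1 (fun x => tendsto_atTop_iSup (hfmono x))
    obtain ⟨n, hn1, hn2⟩ := ((l1.eventually_lt_const hτ2).and (eventually_ge_atTop (max N0 N1))).exists
    have l2 := lint_tendsto (ν := ν) (hem n) (hfm n) (he1 n) (hf1 n)
      (fun x => tendsto_atTop_iInf (hanti n x))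
    obtain ⟨j, hj⟩ := (l2.eventually_lt_const hτ2).exists
    have hRn : R ≤ n := hN0.trans (by exact_mod_cast (le_max_left _ _).trans hn2)
    have hbY : ball x₀ R ⊆ Y n := ball_subset_closedBall.trans (closedBall_subset_closedBall hRn)
    refine ⟨fun x => (e n j x).toReal, (hem n j).ennreal_toReal, fun x => htr (he1 n j x),
      (re_lipOn (hcN j) (hδ j)).mono hbY, ?_, ?_, ?_⟩
    · rintro x ⟨hxC, hxR⟩
      have : x ∈ K n := by
        refine ⟨hbY hxR, ?_⟩
        have h2 : ENNReal.ofReal r ≤ infEDist x Gᶜ := by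
          rw [le_infEDist]
          intro y hy
          by_contra hlt
          push Not at hlt
          refine hy (hrG ?_)
          rw [mem_thickening_iff]
          refine ⟨x, hxC, ?_⟩
          rw [edist_dist, ENNReal.ofReal_lt_ofReal_iff hr] at hlt
          rwa [dist_comm]
        refine le_trans ?_ (hN1.le.trans h2)
        rw [ENNReal.inv_le_inv]
        refine le_trans ?_ le_self_add
        exact_mod_cast (le_max_right _ _).trans hn2
      simp [heK n j x this]
    · intro γ t ht htB D hD
      refine (re_deriv (fun x => ?_) (hδ j) isOpen_ball hbY γ ht htB hD).trans (min_le_left _ _)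
      exact ne_top_of_le_ne_top (by finiteness) (min_le_right _ _)
    · calc _ ≤ ∫⁻ x, (ENNReal.ofReal |(e n j x).toReal - (f n x).toReal| +
            ENNReal.ofReal |(f n x).toReal - (F x).toReal|) ∂ν := by
            apply lintegral_mono
            intro x
            simp only
            rw [← ENNReal.ofReal_add (abs_nonneg _) (abs_nonneg _)]
            exact ENNReal.ofReal_le_ofReal (abs_sub_le _ _ _)
        _ ≤ _ := (lintegral_add_left
            ((hem n j).ennreal_toReal.sub (hfm n).ennreal_toReal).abs.ennreal_ofReal _).le
        _ < τ / 2 + τ / 2 := ENNReal.add_lt_add hj hn1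
        _ = τ := ENNReal.add_halves τ


/-- truncated distance to the complement -/
def rho (W : Set X) (x : X) : ℝ := (min 1 (infEDist x Wᶜ)).toReal

/-- exhaustion function -/
def ee (W : Set X) (x₀ x : X) : ℝ := max (dist x x₀) (1 / rho W x)

/-- partition of unity -/
def phi (W : Set X) (x₀ : X) (m : ℕ) (x : X) : ℝ :=
  max 0 (1 - |max (min (dist x x₀) (m + 1)) (1 / max (rho W x) (1 / (m + 1))) - m|)

lemma rho_nonneg (W : Set X) (x : X) : 0 ≤ rho W x := ENNReal.toReal_nonneg

lemma rho_lip (W : Set X) (x y : X) : |rho W x - rho W y| ≤ dist x y := by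
  have key : ∀ x y : X, rho W x ≤ rho W y + dist x y := by
    intro x y
    have h1 : min 1 (infEDist x Wᶜ) ≤ min 1 (infEDist y Wᶜ) + edist x y := by
      rw [min_add]
      refine le_min ((min_le_left _ _).trans le_self_add) ((min_le_right _ _).trans ?_)
      exact infEDist_le_infEDist_add_edist
    have h2 : min 1 (infEDist y Wᶜ) ≠ ∞ := ne_top_of_le_ne_top ENNReal.one_ne_top (min_le_left _ _)
    have h3 := ENNReal.toReal_mono (ENNReal.add_ne_top.2 ⟨h2, edist_ne_top x y⟩) h1
    rwa [ENNReal.toReal_add h2 (edist_ne_top x y), ← dist_edist] at h3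
  rw [abs_le]
  have h1 := key x y
  have h2 := key y x
  rw [dist_comm] at h2
  constructor <;> linarith

lemma rho_cont (W : Set X) : Continuous (rho W) := by
  refine (LipschitzWith.of_dist_le_mul (K := 1) fun x y => ?_).continuous
  simpa [Real.dist_eq] using rho_lip W x y

lemma rho_pos {W : Set X} (hW : IsOpen W) {x : X} (hx : x ∈ W) : 0 < rho W x := by
  refine ENNReal.toReal_pos ?_ (ne_top_of_le_ne_top ENNReal.one_ne_top (min_le_left _ _))
  refine (lt_min one_pos (pos_iff_ne_zero.2 fun h2 => ?_)).ne'
  have h3 := mem_closure_iff_infEDist_zero.2 h2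
  rw [hW.isClosed_compl.closure_eq] at h3
  exact h3 hx

lemma rho_off {W : Set X} {x : X} (hx : x ∉ W) : rho W x = 0 := by
  have : infEDist x Wᶜ = 0 := infEDist_zero_of_mem hx
  simp [rho, this]

lemma phi_nonneg (W : Set X) (x₀ : X) (m : ℕ) (x : X) : 0 ≤ phi W x₀ m x := le_max_left _ _

lemma inv_max_eq {r : ℝ} (hr : 0 < r) (m : ℕ) :
    1 / max r (1 / (m + 1 : ℝ)) = min (1 / r) (m + 1) := by
  have hm : (0 : ℝ) < m + 1 := by positivity
  rcases le_total r (1 / (m + 1 : ℝ)) with h | h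
  · rw [max_eq_right h, min_eq_right, one_div_one_div]
    rwa [le_one_div hm hr]
  · rw [max_eq_left h, min_eq_left]
    rwa [one_div_le hr hm]

lemma phi_eq {W : Set X} (hW : IsOpen W) (x₀ : X) (m : ℕ) {x : X} (hx : x ∈ W) :
    phi W x₀ m x = max 0 (1 - |ee W x₀ x - m|) := by
  unfold phi ee
  rw [inv_max_eq (rho_pos hW hx), ← min_max_distrib_right]
  set s := max (dist x x₀) (1 / rho W x)
  rcases le_total s (m + 1) with h | h
  · rw [min_eq_left h]
  · rw [min_eq_right h, max_eq_left, max_eq_left]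
    · have := le_abs_self (s - m); linarith
    · have := le_abs_self ((m : ℝ) + 1 - m); linarith

lemma phi_off {W : Set X} (x₀ : X) (m : ℕ) {x : X} (hx : x ∉ W) : phi W x₀ m x = 0 := by
  unfold phi
  have hm : (0 : ℝ) < m + 1 := by positivity
  rw [rho_off hx, max_eq_right (show (0 : ℝ) ≤ 1 / (m + 1 : ℝ) by positivity), one_div_one_div,
    max_eq_right (min_le_right _ _)]
  simp

lemma phi_lip (W : Set X) (x₀ : X) (m : ℕ) (x y : X) :
    |phi W x₀ m x - phi W x₀ m y| ≤ ((m : ℝ) + 1) ^ 2 * dist x y := by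
  have hm : (0 : ℝ) < m + 1 := by positivity
  have hm1 : (1 : ℝ) ≤ ((m : ℝ) + 1) ^ 2 := by
    have : (0 : ℝ) ≤ m := by positivity
    nlinarith
  have hT : ∀ a b : ℝ, |max 0 (1 - |a - m|) - max 0 (1 - |b - m|)| ≤ |a - b| := by
    intro a b
    rw [max_comm 0, max_comm 0]
    refine (abs_max_sub_max_le_abs (1 - |a - m|) (1 - |b - m|) (0 : ℝ)).trans ?_
    have h1 := abs_abs_sub_abs_le_abs_sub (a - m) (b - m)
    rw [show a - m - (b - m) = a - b by ring] at h1
    rw [abs_sub_comm, show 1 - |b - m| - (1 - |a - m|) = |a - m| - |b - m| by ring]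
    exact h1
  unfold phi
  refine (hT _ _).trans ((abs_max_sub_max_le_max _ _ _ _).trans (max_le ?_ ?_))
  · have h1 : |min (dist x x₀) (m + 1) - min (dist y x₀) (m + 1)| ≤ |dist x x₀ - dist y x₀| := by
      have := abs_min_sub_min_le_max (dist x x₀) ((m : ℝ) + 1) (dist y x₀) (m + 1)
      simpa using this
    have h2 := abs_dist_sub_le x y x₀
    have h3 : (0 : ℝ) ≤ dist x y := dist_nonneg
    nlinarith
  · set a := max (rho W x) (1 / (m + 1 : ℝ)) with ha
    set b := max (rho W y) (1 / (m + 1 : ℝ)) with hb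
    have ha1 : 1 / (m + 1 : ℝ) ≤ a := le_max_right _ _
    have hb1 : 1 / (m + 1 : ℝ) ≤ b := le_max_right _ _
    have hp : (0 : ℝ) < 1 / (m + 1 : ℝ) := by positivity
    have ha0 : 0 < a := hp.trans_le ha1
    have hb0 : 0 < b := hp.trans_le hb1
    have hab : |a - b| ≤ dist x y := by
      have := abs_max_sub_max_le_abs (rho W x) (rho W y) (1 / (m + 1 : ℝ))
      exact this.trans (rho_lip W x y)
    have h1 : 1 / a - 1 / b = (1 / a) * (1 / b) * (b - a) := by field_simp
    have h2 : 1 / a ≤ m + 1 := by rwa [one_div_le ha0 hm]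
    have h3 : 1 / b ≤ m + 1 := by rwa [one_div_le hb0 hm]
    rw [h1, abs_mul, abs_of_pos (by positivity), abs_sub_comm, sq]
    gcongr

lemma phi_sum {s : ℝ} (hs : 0 ≤ s) (M : ℕ) :
    ∑ m ∈ Finset.range M, max 0 (1 - |s - m|) = min 1 (max 0 (M - s)) := by
  induction M with
  | zero =>
    simp [hs]
  | succ M ih =>
    rw [Finset.sum_range_succ, ih]
    push_cast
    rcases abs_cases (s - M) with ⟨h, h'⟩ | ⟨h, h'⟩ <;> rw [h] <;>
    rcases max_cases 0 ((M : ℝ) - s) with ⟨h1, h1'⟩ | ⟨h1, h1'⟩ <;> rw [h1] <;>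
    rcases max_cases 0 ((M : ℝ) + 1 - s) with ⟨h2, h2'⟩ | ⟨h2, h2'⟩ <;> rw [h2] <;>
    grind

lemma phi_local {W : Set X} (hW : IsOpen W) (x₀ : X) {z : X} (hz : z ∈ W) :
    ∃ r > 0, ∃ S : Finset ℕ, ball z r ⊆ W ∧ ∀ x ∈ ball z r, (∀ m ∉ S, phi W x₀ m x = 0) ∧
      ∑ m ∈ S, phi W x₀ m x = 1 ∧ ∀ m ∈ S, x ∈ ball x₀ (m + 2) ∧ ee W x₀ z ≤ m + 2 := by
  have hcont : ContinuousAt (ee W x₀) z := by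
    unfold ee
    have c1 : ContinuousAt (fun x => dist x x₀) z := by fun_prop
    have c2 : ContinuousAt (fun x => 1 / rho W x) z := ContinuousAt.div continuousAt_const
      (rho_cont W).continuousAt (rho_pos hW hz).ne'
    exact c1.sup c2
  have h1 : ∀ᶠ x in 𝓝 z, |ee W x₀ x - ee W x₀ z| < 1 / 2 := by
    have := hcont.eventually (ball_mem_nhds _ (by norm_num : (0 : ℝ) < 1 / 2))
    simpa only [mem_ball, Real.dist_eq] using this
  obtain ⟨r, hr, hball⟩ := Metric.eventually_nhds_iff_ball.1 (h1.and (hW.mem_nhds hz))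
  set s := ee W x₀ z with hs
  set M := ⌈s⌉₊ + 2 with hM
  have hMs : s + 2 ≤ M := by rw [hM]; push_cast; linarith [Nat.le_ceil s]
  classical
  refine ⟨r, hr, (Finset.range M).filter (fun m : ℕ => |s - m| < 3 / 2), fun x hx => (hball x hx).2,
    fun x hx => ?_⟩
  obtain ⟨hx1, hxW⟩ := hball x hx
  have hx2 := abs_lt.1 hx1
  have hd : dist x x₀ ≤ ee W x₀ x := le_max_left _ _
  have hzero : ∀ m ∉ (Finset.range M).filter (fun m : ℕ => |s - m| < 3 / 2), phi W x₀ m x = 0 := by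
    intro m hm
    rw [phi_eq hW x₀ m hxW]
    apply max_eq_left
    rw [Finset.mem_filter, Finset.mem_range, not_and_or] at hm
    have h5 : 3 / 2 ≤ |s - m| := by
      rcases hm with hm | hm
      · push Not at hm
        have : (M : ℝ) ≤ m := by exact_mod_cast hm
        have := neg_abs_le (s - m)
        linarith
      · push Not at hm; exact hm
    have h6 := abs_sub_abs_le_abs_sub (s - m) (ee W x₀ x - m)
    rw [show s - m - (ee W x₀ x - m) = -(ee W x₀ x - s) by ring, abs_neg] at h6
    linarith
  refine ⟨hzero, ?_, ?_⟩
  · rw [Finset.sum_subset (Finset.filter_subset _ _) (fun m _ hm => hzero m hm)]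
    rw [Finset.sum_congr rfl (fun m _ => phi_eq hW x₀ m hxW), phi_sum (dist_nonneg.trans hd)]
    apply min_eq_left
    refine le_trans ?_ (le_max_right _ _)
    linarith
  · intro m hm
    rw [Finset.mem_filter] at hm
    have := abs_lt.1 hm.2
    refine ⟨?_, by linarith⟩
    rw [mem_ball]; linarith


lemma LocLipOn.of_local {A : Set X} {v : X → ℝ}
    (h : ∀ z ∈ A, ∃ r > (0 : ℝ), ∃ v' : X → ℝ, LocLipOn v' (A ∩ ball z r) ∧
      ∀ x ∈ A ∩ ball z r, v x = v' x) : LocLipOn v A := by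
  intro z hz
  obtain ⟨r, hr, v', hv', heq⟩ := h z hz
  obtain ⟨r', hr', K, hK⟩ := hv' z ⟨hz, mem_ball_self hr⟩
  refine ⟨min r r', lt_min hr hr', K, ?_⟩
  rw [lipschitzOnWith_iff_dist_le_mul] at hK ⊢
  intro x hx y hy
  have hx1 : x ∈ A ∩ ball z r := ⟨hx.1, ball_subset_ball (min_le_left _ _) hx.2⟩
  have hy1 : y ∈ A ∩ ball z r := ⟨hy.1, ball_subset_ball (min_le_left _ _) hy.2⟩
  rw [heq x hx1, heq y hy1]
  exact hK x ⟨hx1, ball_subset_ball (min_le_right _ _) hx.2⟩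
    y ⟨hy1, ball_subset_ball (min_le_right _ _) hy.2⟩

lemma LocLipOn.add {A : Set X} {v w : X → ℝ} (hv : LocLipOn v A) (hw : LocLipOn w A) :
    LocLipOn (fun x => v x + w x) A := by
  intro z hz
  obtain ⟨r, hr, K, hK⟩ := hv z hz
  obtain ⟨r', hr', K', hK'⟩ := hw z hz
  refine ⟨min r r', lt_min hr hr', K + K', ?_⟩
  exact (hK.mono (inter_subset_inter_right _ (ball_subset_ball (min_le_left _ _)))).add
    (hK'.mono (inter_subset_inter_right _ (ball_subset_ball (min_le_right _ _))))

lemma LocLipOn.const {A : Set X} (c : ℝ) : LocLipOn (fun _ : X => c) A :=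
  fun z _ => ⟨1, one_pos, 0, (LipschitzWith.const c).lipschitzOnWith⟩

lemma LocLipOn.sum {A : Set X} {ι : Type*} {v : ι → X → ℝ} (S : Finset ι)
    (hv : ∀ i ∈ S, LocLipOn (v i) A) : LocLipOn (fun x => ∑ i ∈ S, v i x) A := by
  classical
  induction S using Finset.induction_on with
  | empty => simpa using LocLipOn.const 0
  | insert i S hi ih =>
    simp only [Finset.sum_insert hi]
    exact (hv i (Finset.mem_insert_self _ _)).add
      (ih fun j hj => hv j (Finset.mem_insert_of_mem hj))

lemma LocLipOn.mul {A : Set X} {v w : X → ℝ} (hv : LocLipOn v A) (hw : LocLipOn w A)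
    (hv1 : ∀ x ∈ A, |v x| ≤ 1) (hw1 : ∀ x ∈ A, |w x| ≤ 1) : LocLipOn (fun x => v x * w x) A := by
  intro z hz
  obtain ⟨r, hr, K, hK⟩ := hv z hz
  obtain ⟨r', hr', K', hK'⟩ := hw z hz
  refine ⟨min r r', lt_min hr hr', K + K', ?_⟩
  have h1 := hK.mono (inter_subset_inter_right A (ball_subset_ball (min_le_left r r') (x := z)))
  have h2 := hK'.mono (inter_subset_inter_right A (ball_subset_ball (min_le_right r r') (x := z)))
  rw [lipschitzOnWith_iff_dist_le_mul] at h1 h2 ⊢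
  intro x hx y hy
  have a1 := h1 x hx y hy
  have a2 := h2 x hx y hy
  rw [Real.dist_eq] at a1 a2 ⊢
  have e : v x * w x - v y * w y = (v x - v y) * w x + v y * (w x - w y) := by ring
  rw [e]
  refine (abs_add_le _ _).trans ?_
  rw [abs_mul, abs_mul]
  have b1 := hv1 y hy.1
  have b2 := hw1 x hx.1
  push_cast
  nlinarith [abs_nonneg (v x - v y), abs_nonneg (w x - w y), abs_nonneg (v y), abs_nonneg (w x)]

lemma LocLipOn.one_sub {A : Set X} {v : X → ℝ} (hv : LocLipOn v A) : LocLipOn (fun x => 1 - v x) A := by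
  refine hv.contraction fun x y => ?_
  rw [show 1 - v x - (1 - v y) = v y - v x by ring, abs_sub_comm]

lemma phi_loclip (W A : Set X) (x₀ : X) (m : ℕ) : LocLipOn (phi W x₀ m) A := by
  intro z hz
  refine ⟨1, one_pos, ((m : ℝ≥0) + 1) ^ 2, ?_⟩
  rw [lipschitzOnWith_iff_dist_le_mul]
  intro x _ y _
  have := phi_lip W x₀ m x y
  rw [Real.dist_eq]
  push_cast
  exact this

lemma phi_le_one (W : Set X) (x₀ : X) (m : ℕ) (x : X) : phi W x₀ m x ≤ 1 := by
  unfold phi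
  refine max_le zero_le_one ?_
  linarith [abs_nonneg (max (min (dist x x₀) (m + 1)) (1 / max (rho W x) (1 / (m + 1))) - m)]

lemma patch [ProperSpace X] {μ : Measure X} [IsLocallyFiniteMeasure μ] {x₀ : X} {G : Set X}
    {ε : ℝ≥0∞} {û : X → ℝ} {gh : X → ℝ≥0∞} (hc : Cut μ x₀ G ε û gh) (hG : IsOpen G)
    {W C : Set X} (hW : IsOpen W) (hC : IsClosed C) (hWC : W ∩ C ⊆ G) (ν : Measure X)
    [IsFiniteMeasure ν] {τ : ℝ≥0∞} (hτ : 0 < τ) :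
    ∃ (η : X → ℝ) (b : X → ℝ≥0∞), (∀ x, η x ∈ Icc (0 : ℝ) 1) ∧ LocLipOn η W ∧
      (∀ z ∈ W ∩ C, ∃ r > 0, ∀ x ∈ ball z r, η x = 1) ∧ Measurable b ∧ ∫⁻ x, b x ∂μ ≤ τ ∧
      DUG μ W η (fun x => gh x + b x) ∧ ∫⁻ x in W, ENNReal.ofReal |η x - û x| ∂ν ≤ τ := by
  obtain ⟨τ', hτ'0, hτ's⟩ := ENNReal.exists_pos_sum_of_countable' hτ.ne' ℕ
  -- compact pieces
  set Fm : ℕ → Set X := fun m =>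
    (C ∩ closedBall x₀ (m + 2)) ∩ {x | 1 / (m + 2 : ℝ) ≤ rho W x} with hFm
  have hFc : ∀ m, IsCompact (Fm m) := fun m =>
    ((isCompact_closedBall x₀ _).inter_left hC).inter_right
      (isClosed_le continuous_const (rho_cont W))
  have hFG : ∀ m, Fm m ⊆ G := by
    intro m x hx
    refine hWC ⟨?_, hx.1.1⟩
    by_contra hxW
    have h1 := hx.2
    rw [mem_ofPred_eq, rho_off hxW] at h1
    have : (0 : ℝ) < 1 / (m + 2 : ℝ) := by positivity
    linarith
  have hK := fun m => exists_compact_between (hFc m) hG (hFG m)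
  choose K hKc hFK hKG using hK
  set L : ℕ → ℝ := fun m => ((m : ℝ) + 1) ^ 2 with hL
  set νm : ℕ → Measure X := fun m => ν + ENNReal.ofReal (L m) • μ.restrict (ball x₀ (m + 2)) with hνm
  have hνfin : ∀ m, IsFiniteMeasure (νm m) := by
    intro m
    have : IsFiniteMeasure (μ.restrict (ball x₀ (m + 2))) := ⟨by
      rw [Measure.restrict_apply_univ]; exact measure_ball_lt_top⟩
    have : IsFiniteMeasure (ENNReal.ofReal (L m) • μ.restrict (ball x₀ (m + 2))) :=
      Measure.smul_finite _ ENNReal.ofReal_ne_top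
    infer_instance
  have happ := fun m : ℕ => hc.approx (m + 2) (K m) (hKc m) (hKG m) (νm m) (hνfin m) (τ' m) (hτ'0 m)
  choose η hηm hηI hηlip hη1 hηD hηint using happ
  have hηint2 : ∀ m, ∫⁻ x, ENNReal.ofReal |η m x - û x| ∂ν +
      ENNReal.ofReal (L m) * ∫⁻ x in ball x₀ (m + 2), ENNReal.ofReal |η m x - û x| ∂μ ≤ τ' m := by
    intro m
    have := (hηint m).le
    rwa [hνm, lintegral_add_measure, lintegral_smul_measure, smul_eq_mul] at this
  have hdm : ∀ m, Measurable fun x => ENNReal.ofReal |η m x - û x| := fun m =>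
    ((hηm m).sub hc.um).abs.ennreal_ofReal
  set bm : ℕ → X → ℝ≥0∞ := fun m => (ball x₀ (m + 2)).indicator
    (fun x => ENNReal.ofReal (L m) * ENNReal.ofReal |η m x - û x|) with hbm
  have hbmm : ∀ m, Measurable (bm m) := fun m =>
    ((hdm m).const_mul _).indicator measurableSet_ball
  set H : X → ℝ := fun x => ∑' m, phi W x₀ m x * η m x with hH
  have hHsum : ∀ (x : X) (S : Finset ℕ), (∀ m ∉ S, phi W x₀ m x = 0) →
      H x = ∑ m ∈ S, phi W x₀ m x * η m x := by
    intro x S hS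
    exact tsum_eq_sum fun m hm => by rw [hS m hm, zero_mul]
  refine ⟨H, fun x => ∑' m, bm m x, ?_, ?_, ?_, Measurable.ennreal_tsum hbmm, ?_, ?_, ?_⟩
  · intro x
    by_cases hx : x ∈ W
    · obtain ⟨r, hr, S, hb, hS⟩ := phi_local hW x₀ hx
      obtain ⟨s1, s2, s3⟩ := hS x (mem_ball_self hr)
      rw [hHsum x S s1]
      constructor
      · exact Finset.sum_nonneg fun m _ => mul_nonneg (phi_nonneg _ _ _ _) (hηI m x).1
      · rw [← s2]
        exact Finset.sum_le_sum fun m _ => mul_le_of_le_one_right (phi_nonneg _ _ _ _) (hηI m x).2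
    · have : H x = 0 := by
        rw [hHsum x ∅ fun m _ => phi_off x₀ m hx]; simp
      rw [this]; simp
  · apply LocLipOn.of_local
    intro z hz
    obtain ⟨r, hr, S, hb, hS⟩ := phi_local hW x₀ hz
    refine ⟨r, hr, fun x => ∑ m ∈ S, phi W x₀ m x * η m x, ?_, fun x hx => hHsum x S (hS x hx.2).1⟩
    refine LocLipOn.sum S fun m hm => LocLipOn.mul (phi_loclip _ _ _ _) ?_ ?_ ?_
    · exact (hηlip m).mono fun x hx => ((hS x hx.2).2.2 m hm).1
    · intro x _; rw [abs_of_nonneg (phi_nonneg _ _ _ _)]; exact phi_le_one _ _ _ _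
    · intro x _; rw [abs_of_nonneg (hηI m x).1]; exact (hηI m x).2
  · rintro z ⟨hz, hzC⟩
    obtain ⟨r, hr, S, hb, hS⟩ := phi_local hW x₀ hz
    have hzK : ∀ m ∈ S, z ∈ interior (K m) := by
      intro m hm
      apply hFK m
      have h1 := ((hS z (mem_ball_self hr)).2.2 m hm).2
      refine ⟨⟨hzC, ?_⟩, ?_⟩
      · exact mem_closedBall.2 ((le_max_left _ _).trans h1)
      · rw [mem_ofPred_eq, one_div_le (by positivity) (rho_pos hW hz)]
        exact (le_max_right _ _).trans h1
    have h2 : ∀ᶠ x in 𝓝 z, ∀ m ∈ S, x ∈ K m := by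
      rw [Filter.eventually_all_finset]
      intro m hm
      exact mem_interior_iff_mem_nhds.1 (hzK m hm)
    obtain ⟨r', hr', h3⟩ := Metric.eventually_nhds_iff_ball.1 h2
    refine ⟨min r r', lt_min hr hr', fun x hx => ?_⟩
    obtain ⟨s1, s2, s3⟩ := hS x (ball_subset_ball (min_le_left _ _) hx)
    rw [hHsum x S s1, ← s2]
    refine Finset.sum_congr rfl fun m hm => ?_
    rw [hη1 m x ⟨h3 x (ball_subset_ball (min_le_right _ _) hx) m hm, (s3 m hm).1⟩, mul_one]
  · rw [lintegral_tsum fun m => (hbmm m).aemeasurable]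
    refine le_trans (ENNReal.tsum_le_tsum fun m => ?_) hτ's.le
    rw [hbm, lintegral_indicator measurableSet_ball, lintegral_const_mul _ (hdm m)]
    exact le_add_self.trans (hηint2 m)
  · refine AEC.of_all fun γ => ?_
    filter_upwards [ae_all_iff.2 fun m => (hηlip m).ae_diff isOpen_ball γ,
      ae_all_iff.2 fun m => (phi_loclip W univ x₀ m).ae_diff isOpen_univ γ] with t h1 h2 ht htW D hD
    obtain ⟨r, hr, S, hb, hS⟩ := phi_local hW x₀ htW
    obtain ⟨s1, s2, s3⟩ := hS _ (mem_ball_self hr)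
    have hγc : ContinuousAt γ.toFun t := γ.cont.continuousAt (Icc_mem_nhds ht.1 ht.2)
    have hev : ∀ᶠ s in 𝓝 t, γ.toFun s ∈ ball (γ.toFun t) r := hγc (ball_mem_nhds _ hr)
    set p : ℕ → ℝ := fun m => deriv (fun s => phi W x₀ m (γ.toFun s)) t with hp
    set q : ℕ → ℝ := fun m => deriv (fun s => η m (γ.toFun s)) t with hq
    have hpd : ∀ m, HasDerivAt (fun s => phi W x₀ m (γ.toFun s)) (p m) t := fun m =>
      (h2 m ht (mem_univ _)).hasDerivAt
    have hqd : ∀ m ∈ S, HasDerivAt (fun s => η m (γ.toFun s)) (q m) t := fun m hm =>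
      (h1 m ht (s3 m hm).1).hasDerivAt
    have hsum0 : ∑ m ∈ S, p m = 0 := by
      have d1 : HasDerivAt (fun s => ∑ m ∈ S, phi W x₀ m (γ.toFun s)) (∑ m ∈ S, p m) t :=
        HasDerivAt.fun_sum fun m _ => hpd m
      have d2 : HasDerivAt (fun s => ∑ m ∈ S, phi W x₀ m (γ.toFun s)) 0 t := by
        refine (hasDerivAt_const t (1 : ℝ)).congr_of_eventuallyEq ?_
        filter_upwards [hev] with s hs using (hS _ hs).2.1
      exact d1.unique d2
    have hDeq : D = ∑ m ∈ S, (p m * η m (γ.toFun t) + phi W x₀ m (γ.toFun t) * q m) := by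
      have d1 : HasDerivAt (fun s => ∑ m ∈ S, phi W x₀ m (γ.toFun s) * η m (γ.toFun s))
          (∑ m ∈ S, (p m * η m (γ.toFun t) + phi W x₀ m (γ.toFun t) * q m)) t :=
        HasDerivAt.fun_sum fun m hm => (hpd m).mul (hqd m hm)
      refine hD.unique (d1.congr_of_eventuallyEq ?_)
      filter_upwards [hev] with s hs using hHsum _ S (hS _ hs).1
    have hD2 : D = ∑ m ∈ S, phi W x₀ m (γ.toFun t) * q m +
        ∑ m ∈ S, p m * (η m (γ.toFun t) - û (γ.toFun t)) := by
      have : ∑ m ∈ S, p m * (η m (γ.toFun t) - û (γ.toFun t)) = ∑ m ∈ S, p m * η m (γ.toFun t) := by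
        simp only [mul_sub, Finset.sum_sub_distrib, ← Finset.sum_mul, hsum0, zero_mul, sub_zero]
      rw [hDeq, this, Finset.sum_add_distrib, add_comm]
    have hpL : ∀ m, |p m| ≤ L m := by
      intro m
      have := (hpd m).le_of_lip' (C := L m) (by positivity) (by
        filter_upwards [Icc_mem_nhds ht.1 ht.2] with s hs
        rw [Real.norm_eq_abs, Real.norm_eq_abs]
        refine (phi_lip W x₀ m _ _).trans ?_
        have := γ.lip.dist_le_mul s hs t ⟨ht.1.le, ht.2.le⟩
        rw [NNReal.coe_one, one_mul, Real.dist_eq] at this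
        gcongr)
      simpa using this
    have hDle : |D| ≤ ∑ m ∈ S, phi W x₀ m (γ.toFun t) * |q m| +
        ∑ m ∈ S, L m * |η m (γ.toFun t) - û (γ.toFun t)| := by
      rw [hD2]
      refine (abs_add_le _ _).trans (add_le_add ?_ ?_)
      · refine (Finset.abs_sum_le_sum_abs _ _).trans (Finset.sum_le_sum fun m _ => ?_)
        rw [abs_mul, abs_of_nonneg (phi_nonneg _ _ _ _)]
      · refine (Finset.abs_sum_le_sum_abs _ _).trans (Finset.sum_le_sum fun m _ => ?_)
        rw [abs_mul]
        gcongr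
        exact hpL m
    refine (ENNReal.ofReal_le_ofReal hDle).trans (ENNReal.ofReal_add_le.trans (add_le_add ?_ ?_))
    · rw [ENNReal.ofReal_sum_of_nonneg fun m _ => mul_nonneg (phi_nonneg _ _ _ _) (abs_nonneg _)]
      calc _ ≤ ∑ m ∈ S, ENNReal.ofReal (phi W x₀ m (γ.toFun t)) * gh (γ.toFun t) := by
            refine Finset.sum_le_sum fun m hm => ?_
            rw [ENNReal.ofReal_mul (phi_nonneg _ _ _ _)]
            gcongr
            exact hηD m γ t ht (s3 m hm).1 _ (hqd m hm)
        _ = gh (γ.toFun t) := by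
            rw [← Finset.sum_mul, ← ENNReal.ofReal_sum_of_nonneg fun m _ => phi_nonneg _ _ _ _, s2]
            simp
    · rw [ENNReal.ofReal_sum_of_nonneg fun m _ => mul_nonneg (by positivity) (abs_nonneg _)]
      refine le_trans (Finset.sum_le_sum fun m hm => ?_) (ENNReal.sum_le_tsum S)
      simp only [hbm]
      rw [indicator_of_mem (s3 m hm).1, ENNReal.ofReal_mul (by positivity)]
  · calc ∫⁻ x in W, ENNReal.ofReal |H x - û x| ∂ν
        ≤ ∫⁻ x in W, ∑' m, ENNReal.ofReal |η m x - û x| ∂ν := by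
          refine setLIntegral_mono' hW.measurableSet fun x hx => ?_
          obtain ⟨r, hr, S, hb, hS⟩ := phi_local hW x₀ hx
          obtain ⟨s1, s2, s3⟩ := hS x (mem_ball_self hr)
          have : H x - û x = ∑ m ∈ S, phi W x₀ m x * (η m x - û x) := by
            simp only [mul_sub, Finset.sum_sub_distrib, ← Finset.sum_mul, s2, one_mul]
            rw [hHsum x S s1]
          rw [this]
          refine le_trans ?_ (ENNReal.sum_le_tsum S)
          rw [← ENNReal.ofReal_sum_of_nonneg fun m _ => abs_nonneg _]
          apply ENNReal.ofReal_le_ofReal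
          refine (Finset.abs_sum_le_sum_abs _ _).trans (Finset.sum_le_sum fun m _ => ?_)
          rw [abs_mul, abs_of_nonneg (phi_nonneg _ _ _ _)]
          exact mul_le_of_le_one_left (abs_nonneg _) (phi_le_one _ _ _ _)
      _ ≤ ∫⁻ x, ∑' m, ENNReal.ofReal |η m x - û x| ∂ν := setLIntegral_le_lintegral _ _
      _ = ∑' m, ∫⁻ x, ENNReal.ofReal |η m x - û x| ∂ν :=
          lintegral_tsum fun m => (hdm m).aemeasurable
      _ ≤ ∑' m, τ' m := ENNReal.tsum_le_tsum fun m => le_self_add.trans (hηint2 m)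
      _ ≤ τ := hτ's.le


lemma abs_le_one_of_mem {a : ℝ} (h : a ∈ Icc (0 : ℝ) 1) : |a| ≤ 1 := by
  rw [abs_of_nonneg h.1]; exact h.2

lemma product_lip {W Ω : Set X} (hΩ : IsOpen Ω) {η w v : X → ℝ}
    (hηI : ∀ x, η x ∈ Icc (0 : ℝ) 1) (hwI : ∀ x, w x ∈ Icc (0 : ℝ) 1)
    (hvI : ∀ x, v x ∈ Icc (0 : ℝ) 1)
    (hη : LocLipOn η W) (hw : LocLipOn w Ω) (hv : LocLipOn v W)
    (h1 : ∀ z ∈ W ∩ Ωᶜ, ∃ r > 0, ∀ x ∈ ball z r, η x = 1) :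
    LocLipOn (fun x => (1 - η x) * w x + η x * v x) W := by
  apply LocLipOn.of_local
  intro z hz
  by_cases hzΩ : z ∈ Ω
  · obtain ⟨r, hr, hb⟩ := Metric.isOpen_iff.1 hΩ z hzΩ
    refine ⟨r, hr, _, ?_, fun x hx => rfl⟩
    have hη' := hη.mono (inter_subset_left (s := W) (t := ball z r))
    refine (hη'.one_sub.mul (hw.mono (inter_subset_right.trans hb)) ?_ ?_).add
      (hη'.mul (hv.mono inter_subset_left) ?_ ?_)
    · intro x _
      apply abs_le_one_of_mem
      constructor <;> linarith [(hηI x).1, (hηI x).2]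
    · exact fun x _ => abs_le_one_of_mem (hwI x)
    · exact fun x _ => abs_le_one_of_mem (hηI x)
    · exact fun x _ => abs_le_one_of_mem (hvI x)
  · obtain ⟨r, hr, hb⟩ := h1 z ⟨hz, hzΩ⟩
    refine ⟨r, hr, v, hv.mono inter_subset_left, fun x hx => ?_⟩
    rw [hb x hx.2]; ring

lemma product_dug {μ : Measure X} {W Ω : Set X} (hW : IsOpen W) (hΩ : IsOpen Ω) {η w v : X → ℝ}
    {gη gw gv : X → ℝ≥0∞}
    (hηI : ∀ x, η x ∈ Icc (0 : ℝ) 1) (hwI : ∀ x, w x ∈ Icc (0 : ℝ) 1)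
    (hvI : ∀ x, v x ∈ Icc (0 : ℝ) 1)
    (hη : LocLipOn η W) (hw : LocLipOn w Ω) (hv : LocLipOn v W)
    (h1 : ∀ z ∈ W ∩ Ωᶜ, ∃ r > 0, ∀ x ∈ ball z r, η x = 1)
    (dη : DUG μ W η gη) (dw : DUG μ Ω w gw) (dv : DUG μ W v gv) :
    DUG μ W (fun x => (1 - η x) * w x + η x * v x) (fun x =>
      Ω.indicator (fun x => ENNReal.ofReal (1 - η x) * gw x) x + ENNReal.ofReal (η x) * gv x + gη x) := by
  refine AEC.mono ((dη.and dw).and dv) fun γ hγ => ?_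
  obtain ⟨⟨e1, e2⟩, e3⟩ := hγ
  filter_upwards [e1, e2, e3, hη.ae_diff hW γ, hw.ae_diff hΩ γ, hv.ae_diff hW γ] with
    t d1 d2 d3 f1 f2 f3 ht htW D hD
  have k1 := (f1 ht htW).hasDerivAt
  have k3 := (f3 ht htW).hasDerivAt
  set η' := deriv (fun s => η (γ.toFun s)) t
  set v' := deriv (fun s => v (γ.toFun s)) t
  have b1 := d1 ht htW _ k1
  have b3 := d3 ht htW _ k3
  by_cases htΩ : γ.toFun t ∈ Ω
  · have k2 := (f2 ht htΩ).hasDerivAt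
    set w' := deriv (fun s => w (γ.toFun s)) t
    have b2 := d2 ht htΩ _ k2
    have hD2 := hD.unique (((k1.const_sub 1).mul k2).add (k1.mul k3))
    have i1 := hηI (γ.toFun t)
    have hle : |D| ≤ (1 - η (γ.toFun t)) * |w'| + η (γ.toFun t) * |v'| + |η'| := by
      have : D = (1 - η (γ.toFun t)) * w' + η (γ.toFun t) * v' + η' * (v (γ.toFun t) - w (γ.toFun t)) := by
        rw [hD2]; ring
      rw [this]
      refine (abs_add_le _ _).trans (add_le_add ((abs_add_le _ _).trans ?_) ?_)
      · rw [abs_mul, abs_mul, abs_of_nonneg i1.1, abs_of_nonneg (by linarith [i1.2])]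
      · rw [abs_mul]
        exact mul_le_of_le_one_right (abs_nonneg _) (abs_sub_le_one (hvI _) (hwI _))
    rw [indicator_of_mem htΩ]
    refine (ENNReal.ofReal_le_ofReal hle).trans ?_
    refine ENNReal.ofReal_add_le.trans (add_le_add (ENNReal.ofReal_add_le.trans ?_) b1)
    rw [ENNReal.ofReal_mul i1.1, ENNReal.ofReal_mul (by linarith [i1.2])]
    gcongr
  · obtain ⟨r, hr, hb⟩ := h1 _ ⟨htW, htΩ⟩
    have hγc : ContinuousAt γ.toFun t := γ.cont.continuousAt (Icc_mem_nhds ht.1 ht.2)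
    have hev : ∀ᶠ s in 𝓝 t, γ.toFun s ∈ ball (γ.toFun t) r := hγc (ball_mem_nhds _ hr)
    have : D = v' := by
      refine hD.unique (k3.congr_of_eventuallyEq ?_)
      filter_upwards [hev] with s hs
      rw [hb _ hs]; ring
    rw [this, hb _ (mem_ball_self hr)]
    refine b3.trans ?_
    rw [ENNReal.ofReal_one, one_mul, add_assoc]
    exact le_self_add.trans le_add_self

lemma LocLipOn.aemeas {μ : Measure X} {W : Set X} (hW : IsOpen W) {η : X → ℝ} (hη : LocLipOn η W) :
    AEMeasurable η (μ.restrict W) := hη.continuousOn.aemeasurable hW.measurableSet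

lemma product {μ : Measure X} {W Ω : Set X} (hW : IsOpen W) (hΩ : IsOpen Ω) {η w v : X → ℝ}
    {gη gw gv : X → ℝ≥0∞}
    (hηI : ∀ x, η x ∈ Icc (0 : ℝ) 1) (hwI : ∀ x, w x ∈ Icc (0 : ℝ) 1)
    (hvI : ∀ x, v x ∈ Icc (0 : ℝ) 1)
    (hη : LocLipOn η W) (hw : LocLipOn w Ω) (hv : LocLipOn v W)
    (h1 : ∀ z ∈ W ∩ Ωᶜ, ∃ r > 0, ∀ x ∈ ball z r, η x = 1)
    (mη : Measurable gη) (mw : AEMeasurable gw μ) (mv : AEMeasurable gv μ)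
    (dη : DUG μ W η gη) (dw : DUG μ Ω w gw) (dv : DUG μ W v gv) :
    ∃ g, AEMeasurable g μ ∧ DUG μ W (fun x => (1 - η x) * w x + η x * v x) g ∧
      ∫⁻ x in W, g x ∂μ ≤ ∫⁻ x in Ω, (W.indicator (fun x => ENNReal.ofReal (1 - η x) * gw x) x) ∂μ +
        ∫⁻ x in W, ENNReal.ofReal (η x) * gv x ∂μ + ∫⁻ x in W, gη x ∂μ := by
  have hd := product_dug hW hΩ hηI hwI hvI hη hw hv h1 dη dw dv
  have m1 : AEMeasurable (fun x => ENNReal.ofReal (1 - η x) * gw x) (μ.restrict W) :=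
    ((hη.aemeas hW).const_sub 1).ennreal_ofReal.mul mw.restrict
  have m2 : AEMeasurable (fun x => ENNReal.ofReal (η x) * gv x) (μ.restrict W) :=
    (hη.aemeas hW).ennreal_ofReal.mul mv.restrict
  have m3 := m1.indicator hΩ.measurableSet
  refine ⟨W.indicator (fun x =>
      Ω.indicator (fun x => ENNReal.ofReal (1 - η x) * gw x) x + ENNReal.ofReal (η x) * gv x + gη x),
    (aemeasurable_indicator_iff hW.measurableSet).2 ((m3.add m2).add mη.aemeasurable.restrict),
    hd.mono fun x hx => by rw [indicator_of_mem hx], ?_⟩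
  rw [setLIntegral_indicator hW.measurableSet, inter_self, lintegral_add_right _ mη,
    lintegral_add_right' _ m2, setLIntegral_indicator hΩ.measurableSet,
    setLIntegral_indicator hW.measurableSet, inter_comm]

lemma Cut.mono {μ : Measure X} {x₀ : X} {G : Set X} {ε ε' : ℝ≥0∞} {û : X → ℝ} {gh : X → ℝ≥0∞}
    (h : Cut μ x₀ G ε û gh) (hε : ε ≤ ε') : Cut μ x₀ G ε' û gh where
  um := h.um
  uI := h.uI
  u1 := h.u1
  uint := h.uint.trans hε
  gm := h.gm
  gint := h.gint.trans (by gcongr)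
  approx := h.approx

lemma patch' [ProperSpace X] {μ : Measure X} [IsLocallyFiniteMeasure μ] {x₀ : X} {G : Set X}
    {ε : ℝ≥0∞} {û : X → ℝ} {gh : X → ℝ≥0∞} (hc : Cut μ x₀ G ε û gh) (hG : IsOpen G)
    {W C : Set X} (hW : IsOpen W) (hC : IsClosed C) (hWC : W ∩ C ⊆ G) {g : X → ℝ≥0∞}
    (hg : AEMeasurable g μ) (hgi : ∫⁻ x in W, g x ∂μ ≠ ∞) (R : ℝ) {τ : ℝ≥0∞} (hτ : 0 < τ) :
    ∃ (η : X → ℝ) (gη : X → ℝ≥0∞), (∀ x, η x ∈ Icc (0 : ℝ) 1) ∧ LocLipOn η W ∧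
      (∀ z ∈ W ∩ C, ∃ r > 0, ∀ x ∈ ball z r, η x = 1) ∧ Measurable gη ∧
      ∫⁻ x in W, gη x ∂μ ≤ 4 * ε + τ ∧ DUG μ W η gη ∧
      ∫⁻ x in W ∩ ball x₀ R, ENNReal.ofReal |η x - û x| ∂μ ≤ τ ∧
      ∫⁻ x in W, ENNReal.ofReal |η x - û x| * g x ∂μ ≤ τ := by
  have f1 : IsFiniteMeasure (μ.restrict (ball x₀ R)) := ⟨by
      rw [Measure.restrict_apply_univ]; exact measure_ball_lt_top⟩
  have f2 : IsFiniteMeasure ((μ.restrict W).withDensity g) := isFiniteMeasure_withDensity hgi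
  obtain ⟨η, b, h1, h2, h3, h4, h5, h6, h7⟩ := patch hc hG hW hC hWC
    (μ.restrict (ball x₀ R) + (μ.restrict W).withDensity g) hτ
  have hm : AEMeasurable (fun x => ENNReal.ofReal |η x - û x|) (μ.restrict W) :=
    ((h2.aemeas hW).sub hc.um.aemeasurable).abs.ennreal_ofReal
  rw [Measure.restrict_add, lintegral_add_measure, Measure.restrict_restrict hW.measurableSet,
    restrict_withDensity hW.measurableSet, Measure.restrict_restrict hW.measurableSet, inter_self,
    lintegral_withDensity_eq_lintegral_mul₀ hg.restrict hm] at h7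
  refine ⟨η, fun x => gh x + b x, h1, h2, h3, hc.gm.add h4, ?_, h6, le_self_add.trans h7, ?_⟩
  · rw [lintegral_add_left hc.gm]
    exact add_le_add ((setLIntegral_le_lintegral _ _).trans hc.gint)
      ((setLIntegral_le_lintegral _ _).trans h5)
  · refine le_trans (le_of_eq ?_) (le_add_self.trans h7)
    refine lintegral_congr fun x => ?_
    rw [Pi.mul_apply, mul_comm]


/-- the sequence `1/(n+1)` -/
def dd (n : ℕ) : ℝ≥0∞ := ((n : ℝ≥0∞) + 1)⁻¹

lemma dd_pos (n : ℕ) : 0 < dd n := ENNReal.inv_pos.2 (by finiteness)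

lemma dd_ne_top (n : ℕ) : dd n ≠ ∞ := ENNReal.inv_ne_top.2 (by simp)

lemma dd_anti : Antitone dd := fun a b h => by
  unfold dd
  gcongr

lemma dd_tendsto : Tendsto dd atTop (𝓝 0) := by
  have := (tendsto_add_atTop_iff_nat 1).2 ENNReal.tendsto_inv_nat_nhds_zero
  refine this.congr fun n => ?_
  simp [dd]

lemma dd_mul_tendsto (C : ℝ≥0∞) (hC : C ≠ ∞) : Tendsto (fun n => C * dd n) atTop (𝓝 0) := by
  have := ENNReal.Tendsto.const_mul dd_tendsto (a := C) (Or.inr hC)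
  simpa using this

lemma energy1 {μ : Measure X} {W : Set X} (hW : IsOpen W) {η û : X → ℝ} {g : X → ℝ≥0∞}
    (hηI : ∀ x, η x ∈ Icc (0 : ℝ) 1) (huI : ∀ x, û x ∈ Icc (0 : ℝ) 1) (hη : LocLipOn η W)
    (hû : Measurable û) (hg : AEMeasurable g μ) :
    ∫⁻ x in W, ENNReal.ofReal (1 - η x) * g x ∂μ + ∫⁻ x in W, ENNReal.ofReal (û x) * g x ∂μ ≤
      ∫⁻ x in W, g x ∂μ + ∫⁻ x in W, ENNReal.ofReal |η x - û x| * g x ∂μ := by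
  have m1 : AEMeasurable (fun x => ENNReal.ofReal (û x) * g x) (μ.restrict W) :=
    hû.ennreal_ofReal.aemeasurable.mul hg.restrict
  rw [← lintegral_add_right' _ m1, ← lintegral_add_left' hg.restrict]
  refine lintegral_mono fun x => ?_
  dsimp only
  rw [← add_mul]
  nth_rewrite 2 [← one_mul (g x)]
  rw [← add_mul, ← ENNReal.ofReal_add (by linarith [(hηI x).2]) (huI x).1, ← ENNReal.ofReal_one,
    ← ENNReal.ofReal_add zero_le_one (abs_nonneg _)]
  refine mul_le_mul' (ENNReal.ofReal_le_ofReal ?_) le_rfl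
  linarith [neg_abs_le (η x - û x)]

lemma energy2 {μ : Measure X} {W : Set X} {η û : X → ℝ} {g : X → ℝ≥0∞}
    (huI : ∀ x, û x ∈ Icc (0 : ℝ) 1)
    (hû : Measurable û) (hg : AEMeasurable g μ) :
    ∫⁻ x in W, ENNReal.ofReal (η x) * g x ∂μ ≤
      ∫⁻ x in W, ENNReal.ofReal (û x) * g x ∂μ + ∫⁻ x in W, ENNReal.ofReal |η x - û x| * g x ∂μ := by
  have m1 : AEMeasurable (fun x => ENNReal.ofReal (û x) * g x) (μ.restrict W) :=
    hû.ennreal_ofReal.aemeasurable.mul hg.restrict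
  rw [← lintegral_add_left' m1]
  refine lintegral_mono fun x => ?_
  dsimp only
  rw [← add_mul, ← ENNReal.ofReal_add (huI x).1 (abs_nonneg _)]
  gcongr
  linarith [le_abs_self (η x - û x)]

lemma chi_aemeas {μ : Measure X} {E : Set X} (hE : NullMeasurableSet E μ) :
    AEMeasurable (chi E) μ :=
  (aemeasurable_const (b := (1 : ℝ))).indicator₀ hE

lemma abs_step [ProperSpace X] {μ : Measure X} [IsLocallyFiniteMeasure μ] {Ω E : Set X}
    (hΩ : IsOpen Ω) {T : ℝ≥0∞} (hT : T ≠ ∞) (x₀ : X)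
    {ε : ℝ≥0∞} {n : ℕ} {v : X → ℝ} {g : X → ℝ≥0∞} (hv : LocLipOn v Ω)
    (hvI : ∀ x, v x ∈ Icc (0 : ℝ) 1) (hg : AEMeasurable g μ) (hD : DUG μ Ω v g)
    (hgi : ∫⁻ x in Ω, g x ∂μ < T + dd n)
    (hvc : ∫⁻ x in Ω ∩ ball x₀ n, ENNReal.ofReal |v x - chi E x| ∂μ < dd n)
    {G : Set X} {û : X → ℝ} {gh : X → ℝ≥0∞} (hG : IsOpen G) (hc : Cut μ x₀ G (dd n) û gh)
    (hlt : ε ≤ ∫⁻ x in Ω, ENNReal.ofReal (û x) * g x ∂μ) :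
    ∃ (h : X → ℝ) (gg : X → ℝ≥0∞), LocLipOn h Ω ∧ AEMeasurable gg μ ∧ DUG μ Ω h gg ∧
      ∫⁻ x in Ω, gg x ∂μ + ε ≤ T + 7 * dd n ∧
      ∀ R : ℝ, R ≤ n → ∫⁻ x in Ω ∩ ball x₀ R, ENNReal.ofReal |h x - chi E x| ∂μ ≤ 3 * dd n := by
  have hgi' : ∫⁻ x in Ω, g x ∂μ ≠ ∞ := (hgi.trans_le le_top).ne
  obtain ⟨η, gη, h1, h2, h3, h4, h5, h6, h7, h8⟩ := patch' hc hG hΩ isClosed_empty (by simp) hg hgi'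
    n (dd_pos n)
  have z : ∀ x : X, (0 : ℝ) ∈ Icc (0 : ℝ) 1 := by simp
  have hz1 : ∀ w ∈ Ω ∩ Ωᶜ, ∃ r > 0, ∀ x ∈ ball w r, η x = 1 := by
    intro w hw; exact absurd hw.1 hw.2
  have hz : LocLipOn (fun _ : X => (0 : ℝ)) Ω := fun x hx => ⟨1, one_pos, 0,
    (LipschitzWith.const 0).lipschitzOnWith⟩
  have dz : DUG μ Ω (fun _ : X => (0 : ℝ)) (fun _ => 0) := by
    refine AEC.of_all fun γ => Eventually.of_forall fun t _ _ D hD => ?_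
    rw [hD.unique (hasDerivAt_const t (0 : ℝ))]
    simp
  have hl := product_lip hΩ h1 hvI z h2 hv hz hz1
  obtain ⟨gg, g1, g2, g3⟩ := product hΩ hΩ h1 hvI z h2 hv hz hz1 h4 hg aemeasurable_const h6 hD dz
  refine ⟨_, gg, hl, g1, g2, ?_, ?_⟩
  · have e := energy1 hΩ h1 hc.uI h2 hc.um hg
    have e3 : ∫⁻ x in Ω, gg x ∂μ ≤ ∫⁻ x in Ω, ENNReal.ofReal (1 - η x) * g x ∂μ +
        (4 * dd n + dd n) := by
      refine g3.trans (add_le_add ?_ h5)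
      rw [setLIntegral_indicator hΩ.measurableSet, inter_self]
      simp
    calc _ ≤ ∫⁻ x in Ω, ENNReal.ofReal (1 - η x) * g x ∂μ + (4 * dd n + dd n) +
          ∫⁻ x in Ω, ENNReal.ofReal (û x) * g x ∂μ := add_le_add e3 hlt
      _ = (∫⁻ x in Ω, ENNReal.ofReal (1 - η x) * g x ∂μ +
          ∫⁻ x in Ω, ENNReal.ofReal (û x) * g x ∂μ) + (4 * dd n + dd n) := by ring
      _ ≤ ((T + dd n) + dd n) + (4 * dd n + dd n) :=
          add_le_add (e.trans (add_le_add hgi.le h8)) le_rfl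
      _ = _ := by ring
  · intro R hR
    have hm : MeasurableSet (Ω ∩ ball x₀ n) := hΩ.measurableSet.inter measurableSet_ball
    have hsub : Ω ∩ ball x₀ R ⊆ Ω ∩ ball x₀ n := inter_subset_inter_right _ (ball_subset_ball hR)
    refine (lintegral_mono_set hsub).trans ?_
    have m1 : AEMeasurable η (μ.restrict (Ω ∩ ball x₀ n)) :=
      (h2.aemeas hΩ).mono_measure (Measure.restrict_mono inter_subset_left le_rfl)
    have m2 : AEMeasurable (fun x => ENNReal.ofReal |η x - û x|) (μ.restrict (Ω ∩ ball x₀ n)) :=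
      (m1.sub hc.um.aemeasurable).abs.ennreal_ofReal
    calc _ ≤ ∫⁻ x in Ω ∩ ball x₀ n, (ENNReal.ofReal |v x - chi E x| +
            ENNReal.ofReal |η x - û x|) + ENNReal.ofReal (û x) ∂μ := by
          refine lintegral_mono fun x => ?_
          rw [← ENNReal.ofReal_add (abs_nonneg _) (abs_nonneg _),
            ← ENNReal.ofReal_add (add_nonneg (abs_nonneg _) (abs_nonneg _)) (hc.uI x).1]
          refine ENNReal.ofReal_le_ofReal ?_
          have a1 : (1 - η x) * v x + η x * 0 - chi E x = (v x - chi E x) - η x * v x := by ring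
          rw [a1]
          have a2 : |η x * v x| ≤ η x := by
            rw [abs_of_nonneg (mul_nonneg (h1 x).1 (hvI x).1)]
            exact mul_le_of_le_one_right (h1 x).1 (hvI x).2
          linarith [abs_sub (v x - chi E x) (η x * v x), le_abs_self (η x - û x)]
      _ = ∫⁻ x in Ω ∩ ball x₀ n, ENNReal.ofReal |v x - chi E x| ∂μ +
            ∫⁻ x in Ω ∩ ball x₀ n, ENNReal.ofReal |η x - û x| ∂μ +
            ∫⁻ x in Ω ∩ ball x₀ n, ENNReal.ofReal (û x) ∂μ := by
          rw [lintegral_add_right _ hc.um.ennreal_ofReal, lintegral_add_right' _ m2]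
      _ ≤ dd n + dd n + dd n := add_le_add (add_le_add hvc.le h7)
            ((setLIntegral_le_lintegral _ _).trans hc.uint)
      _ = _ := by ring

lemma abscont [ProperSpace X] {μ : Measure X} [IsLocallyFiniteMeasure μ] {Ω E : Set X}
    (hΩ : IsOpen Ω) (hT : tvOpen μ Ω (chi E) ≠ ∞) (x₀ : X) {ε : ℝ≥0∞} (hε0 : ε ≠ 0) (hε : ε ≠ ∞) :
    ∃ n : ℕ, ∀ (v : X → ℝ) (g : X → ℝ≥0∞), LocLipOn v Ω → (∀ x, v x ∈ Icc (0 : ℝ) 1) →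
      AEMeasurable g μ → DUG μ Ω v g → ∫⁻ x in Ω, g x ∂μ < tvOpen μ Ω (chi E) + dd n →
      ∫⁻ x in Ω ∩ ball x₀ n, ENNReal.ofReal |v x - chi E x| ∂μ < dd n →
      ∀ (G : Set X) (û : X → ℝ) (gh : X → ℝ≥0∞), IsOpen G → Cut μ x₀ G (dd n) û gh →
      ∫⁻ x in Ω, ENNReal.ofReal (û x) * g x ∂μ ≤ ε := by
  by_contra hcon
  push Not at hcon
  choose v g hv hvI hg hD hgi hvc G û gh hG hc hlt using hcon
  choose h gg h1 h2 h3 h4 h5 using fun n =>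
    abs_step hΩ hT x₀ (hv n) (hvI n) (hg n) (hD n) (hgi n) (hvc n) (hG n) (hc n) (hlt n).le
  have hε2 : 0 < ε / 2 := ENNReal.half_pos hε0
  obtain ⟨N, hN⟩ := eventually_atTop.1
    ((dd_mul_tendsto 7 (by norm_num)).eventually_lt_const hε2)
  have key : tvOpen μ Ω (chi E) + ε ≤ tvOpen μ Ω (chi E) + ε / 2 := by
    have := tvOpen_le_of_approx (u := chi E) (c := tvOpen μ Ω (chi E) + ε / 2 - ε) hΩ
      (lt_of_le_of_lt tsub_le_self (by finiteness)) x₀ (fun i => h (N + i))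
      (fun i => gg (N + i)) (fun i => h1 _) (fun i => h2 _) (fun i => h3 _) (fun i => ?_) ?_
    · have hle : ε ≤ tvOpen μ Ω (chi E) + ε / 2 := by
        refine le_add_self.trans ((h4 N).trans ?_)
        gcongr
        exact (hN N le_rfl).le
      exact (add_le_add this le_rfl).trans (tsub_add_cancel_of_le hle).le
    · refine ENNReal.le_sub_of_add_le_right hε ((h4 _).trans ?_)
      gcongr
      exact (hN _ (Nat.le_add_right _ _)).le
    · intro R
      have t : Tendsto (fun i => 3 * dd (N + i)) atTop (𝓝 0) :=
        (dd_mul_tendsto 3 (by norm_num)).comp (tendsto_atTop_mono (fun i => Nat.le_add_left i N) tendsto_id)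
      refine tendsto_of_tendsto_of_tendsto_of_le_of_le' tendsto_const_nhds t
        (Eventually.of_forall fun _ => zero_le) ?_
      obtain ⟨M, hM⟩ := exists_nat_ge R
      filter_upwards [eventually_ge_atTop M] with i hi
      exact h5 _ R (hM.trans (by exact_mod_cast hi.trans (Nat.le_add_left _ _)))
  have := (ENNReal.add_le_add_iff_left hT).1 key
  exact absurd this (not_le.2 (ENNReal.half_lt_self hε0 hε))


lemma main_step [ProperSpace X] {μ : Measure X} [IsLocallyFiniteMeasure μ] {U Ω Ω₁ W G E F : Set X}
    (hΩ : IsOpen Ω) (hT : tvOpen μ Ω (chi E) ≠ ∞) (x₀ : X) {ε : ℝ≥0∞} {n : ℕ}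
    (hac : ∀ (v : X → ℝ) (g : X → ℝ≥0∞), LocLipOn v Ω → (∀ x, v x ∈ Icc (0 : ℝ) 1) →
      AEMeasurable g μ → DUG μ Ω v g → ∫⁻ x in Ω, g x ∂μ < tvOpen μ Ω (chi E) + dd n →
      ∫⁻ x in Ω ∩ ball x₀ n, ENNReal.ofReal |v x - chi E x| ∂μ < dd n →
      ∀ (G : Set X) (û : X → ℝ) (gh : X → ℝ≥0∞), IsOpen G → Cut μ x₀ G (dd n) û gh →
      ∫⁻ x in Ω, ENNReal.ofReal (û x) * g x ∂μ ≤ ε)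
    {û : X → ℝ} {gh : X → ℝ≥0∞} (hG : IsOpen G) (hc : Cut μ x₀ G ε û gh)
    (hc' : Cut μ x₀ G (dd n) û gh) (hW : IsOpen W) (hWΩ : W ⊆ Ω) (hWU : W ⊆ U ∪ G)
    (hE : NullMeasurableSet E μ) (hF : NullMeasurableSet F μ) (hΩ₁ : IsOpen Ω₁) (hUΩ₁ : U ⊆ Ω₁)
    {L : ℝ≥0∞} (hL : tvOpen μ Ω₁ (chi F) < L) {k : ℕ} (hk : dd k ≤ ε)
    (hFE : ∫⁻ x in U ∩ ball x₀ k, ENNReal.ofReal |chi F x - chi E x| ∂μ ≤ dd k) :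
    ∃ (h : X → ℝ) (gg : X → ℝ≥0∞), LocLipOn h W ∧ AEMeasurable gg μ ∧ DUG μ W h gg ∧
      ∫⁻ x in W, gg x ∂μ ≤ L + 7 * ε ∧
      ∀ R : ℝ, R ≤ k → ∫⁻ x in W ∩ ball x₀ R, ENNReal.ofReal |h x - chi E x| ∂μ ≤ 4 * dd k := by
  obtain ⟨w, gw, w1, w2, w3, w4, w5, w6⟩ := approx_of_tvOpen hΩ₁ hL (B := ball x₀ (k : ℝ))
    measurableSet_ball measure_ball_lt_top (dd_pos k)
  have hTn : tvOpen μ Ω (chi E) < tvOpen μ Ω (chi E) + dd n :=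
    ENNReal.lt_add_right hT (dd_pos n).ne'
  obtain ⟨v, gv, v1, v2, v3, v4, v5, v6⟩ := approx_of_tvOpen hΩ hTn
    (B := ball x₀ (max (n : ℝ) k)) measurableSet_ball measure_ball_lt_top
    (lt_min (dd_pos n) (dd_pos k))
  have vn := ((lintegral_mono_set (inter_subset_inter_right Ω
    (ball_subset_ball (le_max_left (n : ℝ) k)))).trans_lt v6).trans_le (min_le_left _ _)
  have vk := ((lintegral_mono_set (inter_subset_inter_right Ω
    (ball_subset_ball (le_max_right (n : ℝ) k)))).trans_lt v6).trans_le (min_le_right _ _)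
  have hug := hac v gv v1 v2 v3 v4 v5 vn G û gh hG hc'
  have hgi : ∫⁻ x in W, gv x ∂μ ≠ ∞ :=
    ((lintegral_mono_set hWΩ).trans_lt (v5.trans_le le_top)).ne
  have hWC : W ∩ Ω₁ᶜ ⊆ G := fun x hx => (hWU hx.1).resolve_left fun hxU => hx.2 (hUΩ₁ hxU)
  obtain ⟨η, gη, h1, h2, h3, h4, h5, h6, h7, h8⟩ := patch' hc hG hW hΩ₁.isClosed_compl hWC v3 hgi
    k (dd_pos k)
  have v1W := v1.mono hWΩ
  have hl := product_lip hΩ₁ h1 w2 v2 h2 w1 v1W h3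
  obtain ⟨gg, g1, g2, g3⟩ := product hW hΩ₁ h1 w2 v2 h2 w1 v1W h3 h4 w3 v3 h6 w4
    (v4.mono_set hWΩ)
  refine ⟨_, gg, hl, g1, g2, ?_, ?_⟩
  · refine g3.trans ?_
    have a1 : ∫⁻ x in Ω₁, W.indicator (fun x => ENNReal.ofReal (1 - η x) * gw x) x ∂μ ≤ L := by
      refine (lintegral_mono fun x => ?_).trans w5.le
      refine indicator_le_self' (fun _ _ => zero_le) x |>.trans ?_
      refine mul_le_of_le_one_left' ?_
      rw [← ENNReal.ofReal_one]
      exact ENNReal.ofReal_le_ofReal (by linarith [(h1 x).1])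
    have a2 : ∫⁻ x in W, ENNReal.ofReal (η x) * gv x ∂μ ≤ ε + dd k :=
      (energy2 hc.uI hc.um v3).trans (add_le_add ((lintegral_mono_set hWΩ).trans hug) h8)
    calc _ ≤ L + (ε + dd k) + (4 * ε + dd k) := add_le_add (add_le_add a1 a2) h5
      _ ≤ L + (ε + ε) + (4 * ε + ε) := by gcongr
      _ = _ := by ring
  · intro R hR
    have hsub : W ∩ ball x₀ R ⊆ W ∩ ball x₀ k := inter_subset_inter_right _ (ball_subset_ball hR)
    refine (lintegral_mono_set hsub).trans ?_
    have cE := chi_aemeas hE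
    have cF := chi_aemeas hF
    have m1 : AEMeasurable (fun x => ENNReal.ofReal |v x - chi E x|)
        (μ.restrict (W ∩ ball x₀ k)) :=
      (((v1W.aemeas hW).mono_measure (Measure.restrict_mono inter_subset_left le_rfl)).sub
        cE.restrict).abs.ennreal_ofReal
    have m2 : AEMeasurable (fun x => ENNReal.ofReal |chi F x - chi E x|)
        (μ.restrict (U ∩ ball x₀ k)) := (cF.sub cE).abs.ennreal_ofReal.restrict
    have b1 : ∫⁻ x in U ∩ ball x₀ k, ENNReal.ofReal ((1 - η x) * |w x - chi E x|) ∂μ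
        ≤ dd k + dd k := by
      refine le_trans (lintegral_mono (g := fun x => ENNReal.ofReal |w x - chi F x| +
        ENNReal.ofReal |chi F x - chi E x|) fun x => ?_) ?_
      · dsimp only
        rw [← ENNReal.ofReal_add (abs_nonneg _) (abs_nonneg _)]
        refine ENNReal.ofReal_le_ofReal ?_
        refine (mul_le_of_le_one_left (abs_nonneg _) (by linarith [(h1 x).1])).trans ?_
        exact abs_sub_le _ _ _
      · rw [lintegral_add_right' _ m2]
        exact add_le_add ((lintegral_mono_set (inter_subset_inter_left _ hUΩ₁)).trans w6.le) hFE
    have b2 : ∫⁻ x in (W ∩ ball x₀ k) ∩ G, ENNReal.ofReal ((1 - η x) * |w x - chi E x|) ∂μ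
        ≤ dd k := by
      refine le_trans (setLIntegral_mono' (g := fun x => ENNReal.ofReal |η x - û x|)
        ((hW.measurableSet.inter measurableSet_ball).inter hG.measurableSet) fun x hx => ?_)
        ((lintegral_mono_set inter_subset_left).trans h7)
      refine ENNReal.ofReal_le_ofReal ?_
      rw [hc.u1 x hx.2]
      refine (mul_le_of_le_one_right (by linarith [(h1 x).2])
        (abs_sub_le_one (w2 x) (chi_mem E x))).trans ?_
      linarith [neg_abs_le (η x - 1)]
    have b3 : ∫⁻ x in W ∩ ball x₀ k, ENNReal.ofReal ((1 - η x) * |w x - chi E x|) ∂μ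
        ≤ dd k + dd k + dd k := by
      have : W ∩ ball x₀ k ⊆ (U ∩ ball x₀ k) ∪ ((W ∩ ball x₀ k) ∩ G) := by
        intro x hx
        rcases hWU hx.1 with h | h
        · exact Or.inl ⟨h, hx.2⟩
        · exact Or.inr ⟨hx, h⟩
      exact ((lintegral_mono_set this).trans (lintegral_union_le _ _ _)).trans (add_le_add b1 b2)
    calc _ ≤ ∫⁻ x in W ∩ ball x₀ k, ENNReal.ofReal ((1 - η x) * |w x - chi E x|) +
            ENNReal.ofReal |v x - chi E x| ∂μ := by
          refine lintegral_mono fun x => ?_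
          have n1 : 0 ≤ 1 - η x := by linarith [(h1 x).2]
          rw [← ENNReal.ofReal_add (mul_nonneg n1 (abs_nonneg _)) (abs_nonneg _)]
          refine ENNReal.ofReal_le_ofReal ?_
          have a1 : (1 - η x) * w x + η x * v x - chi E x =
            (1 - η x) * (w x - chi E x) + η x * (v x - chi E x) := by ring
          rw [a1]
          refine (abs_add_le _ _).trans ?_
          rw [abs_mul, abs_mul, abs_of_nonneg n1, abs_of_nonneg (h1 x).1]
          exact add_le_add le_rfl (mul_le_of_le_one_left (abs_nonneg _) (h1 x).2)
      _ ≤ (dd k + dd k + dd k) + dd k := by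
          rw [lintegral_add_right' _ m1]
          exact add_le_add b3 ((lintegral_mono_set (inter_subset_inter_left _ hWΩ)).trans vk.le)
      _ = _ := by ring

lemma perim_lt {μ : Measure X} {E U : Set X} {c : ℝ≥0∞} (h : perim μ E U < c) :
    ∃ Ω, IsOpen Ω ∧ U ⊆ Ω ∧ tvOpen μ Ω (chi E) < c := by
  unfold perim tv at h
  simp only [iInf_lt_iff] at h
  obtain ⟨Ω, h1, h2, h3⟩ := h
  exact ⟨Ω, h1, h2, h3⟩

lemma main_eps [ProperSpace X] {μ : Measure X} [IsLocallyFiniteMeasure μ] {U E : Set X}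
    (hU : QuasiOpen μ U) {Ei : ℕ → Set X}
    (hE : NullMeasurableSet E μ) (hEi : ∀ i, NullMeasurableSet (Ei i) μ)
    (hfin : perim μ E U < ∞) (x₀ : X)
    (hconv : L1LocConv μ U (fun i => chi (Ei i)) (chi E))
    {L : ℝ≥0∞} (hL : L ≠ ∞) (hLi : ∃ᶠ i in atTop, perim μ (Ei i) U < L)
    {ε : ℝ} (hε : 0 < ε) :
    perim μ E U ≤ L + 7 * ENNReal.ofReal ε := by
  obtain ⟨Ω, hΩ, hUΩ, hT⟩ := perim_lt hfin
  set e : ℝ≥0∞ := ENNReal.ofReal ε with he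
  have e0 : e ≠ 0 := by simpa [he] using hε
  have et : e ≠ ∞ := ENNReal.ofReal_ne_top
  obtain ⟨n, hn⟩ := abscont hΩ hT.ne x₀ e0 et
  have hmin : min e (dd n) ≠ 0 := (lt_min (pos_iff_ne_zero.2 e0) (dd_pos n)).ne'
  have hmint : min e (dd n) ≠ ∞ := ((min_le_left _ _).trans_lt et.lt_top).ne
  obtain ⟨G, hG, hcap, hUG⟩ := hU (min e (dd n)).toReal (ENNReal.toReal_pos hmin hmint)
  rw [ENNReal.ofReal_toReal hmint] at hcap
  obtain ⟨û, gh, hc⟩ := exists_cut x₀ hG hmin hmint hcap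
  have hW : IsOpen ((U ∪ G) ∩ Ω) := hUG.inter hΩ
  have hUW : U ⊆ (U ∪ G) ∩ Ω := fun x hx => ⟨Or.inl hx, hUΩ hx⟩
  obtain ⟨N, hN⟩ := eventually_atTop.1 (dd_tendsto.eventually_lt_const (pos_iff_ne_zero.2 e0))
  have step : ∀ m : ℕ, ∃ (h : X → ℝ) (gg : X → ℝ≥0∞), LocLipOn h ((U ∪ G) ∩ Ω) ∧
      AEMeasurable gg μ ∧ DUG μ ((U ∪ G) ∩ Ω) h gg ∧
      ∫⁻ x in (U ∪ G) ∩ Ω, gg x ∂μ ≤ L + 7 * e ∧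
      ∀ R : ℝ, R ≤ (N + m : ℕ) → ∫⁻ x in ((U ∪ G) ∩ Ω) ∩ ball x₀ R,
        ENNReal.ofReal |h x - chi E x| ∂μ ≤ 4 * dd (N + m) := by
    intro m
    have hcv := tendsto_of_local (μ := μ) (A := U) (B := ball x₀ ((N + m : ℕ) : ℝ))
      (f := fun i x => ENNReal.ofReal |chi (Ei i) x - chi E x|)
      (fun i x => by
        rw [← ENNReal.ofReal_one]
        exact ENNReal.ofReal_le_ofReal (abs_sub_le_one (chi_mem _ x) (chi_mem _ x)))
      hconv measurableSet_ball measure_ball_lt_top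
    obtain ⟨i, hi1, hi2⟩ := (hLi.and_eventually (hcv.eventually_lt_const (dd_pos (N + m)))).exists
    obtain ⟨Ω₁, o1, o2, o3⟩ := perim_lt hi1
    exact main_step hΩ hT.ne x₀ hn hG (hc.mono (min_le_left _ _)) (hc.mono (min_le_right _ _)) hW
      inter_subset_right inter_subset_left hE (hEi i) o1 o2 o3 (hN _ (Nat.le_add_right _ _)).le
      hi2.le
  choose h gg h1 h2 h3 h4 h5 using step
  have key : tvOpen μ ((U ∪ G) ∩ Ω) (chi E) ≤ L + 7 * e := by
    refine tvOpen_le_of_approx hW (by finiteness) x₀ h gg h1 h2 h3 h4 fun R => ?_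
    have t : Tendsto (fun i => 4 * dd (N + i)) atTop (𝓝 0) :=
      (dd_mul_tendsto 4 (by norm_num)).comp
        (tendsto_atTop_mono (fun i => Nat.le_add_left i N) tendsto_id)
    refine tendsto_of_tendsto_of_tendsto_of_le_of_le' tendsto_const_nhds t
      (Eventually.of_forall fun _ => zero_le) ?_
    obtain ⟨M, hM⟩ := exists_nat_ge R
    filter_upwards [eventually_ge_atTop M] with i hi
    exact h5 _ R (hM.trans (by exact_mod_cast hi.trans (Nat.le_add_left _ _)))
  unfold perim tv
  exact iInf_le_of_le ((U ∪ G) ∩ Ω) (iInf_le_of_le hW (iInf_le_of_le hUW key))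

theorem main_aux
    (μ : Measure X) (hcomp : CompleteSpace X)
    (hdoub : ∃ Cd : ℝ, Doubling μ Cd)
    (U : Set X) (hU : QuasiOpen μ U) (E : Set X) (Ei : ℕ → Set X)
    (hE : NullMeasurableSet E μ) (hEi : ∀ i, NullMeasurableSet (Ei i) μ)
    (hfin : perim μ E U < ∞)
    (hconv : L1LocConv μ U (fun i => Set.indicator (Ei i) (fun _ => (1 : ℝ)))
      (Set.indicator E (fun _ => (1 : ℝ)))) :
    perim μ E U ≤ Filter.liminf (fun i => perim μ (Ei i) U) Filter.atTop := by
  obtain ⟨Cd, hd⟩ := hdoub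
  have i1 : ProperSpace X := hd.proper
  have i2 : IsLocallyFiniteMeasure μ := hd.finiteOnCompacts
  rcases isEmpty_or_nonempty X with hX | ⟨⟨x₀⟩⟩
  · have h : ∀ A B : Set X, A = B := fun A B => Subsingleton.elim _ _
    have : (fun i => perim μ (Ei i) U) = fun _ => perim μ E U := by
      funext i; rw [h (Ei i) E]
    rw [this, liminf_const]
  refine ENNReal.le_of_forall_pos_le_add fun ε hε hL => ?_
  have hε8 : (0 : ℝ) < ε / 8 := by positivity
  have e0 : ENNReal.ofReal ((ε : ℝ) / 8) ≠ 0 := by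
    rw [Ne, ENNReal.ofReal_eq_zero, not_le]; exact hε8
  have hlt := ENNReal.lt_add_right hL.ne e0
  have hfr := frequently_lt_of_liminf_lt (by isBoundedDefault) hlt
  have := main_eps hU hE hEi hfin x₀ hconv (ENNReal.add_ne_top.2 ⟨hL.ne, ENNReal.ofReal_ne_top⟩) hfr hε8
  refine this.trans (le_of_eq ?_)
  rw [add_assoc]
  congr 1
  have h8 : ENNReal.ofReal ((ε : ℝ) / 8) + 7 * ENNReal.ofReal ((ε : ℝ) / 8) =
      8 * ENNReal.ofReal ((ε : ℝ) / 8) := by ring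
  have h88 : (8 : ℝ≥0∞) = ENNReal.ofReal 8 := by simp
  rw [h8, h88, ← ENNReal.ofReal_mul (by norm_num), ← ENNReal.ofReal_coe_nnreal]
  congr 1
  ring


/-- Lower semicontinuity of the perimeter in `1`-quasiopen sets:
if `U` is `1`-quasiopen, `E, E_i` are `μ`-measurable with `P(E,U) < ∞`, `P(E_i,U) < ∞`,
and `χ_{E_i} → χ_E` in `L¹_loc(U)`, then `P(E,U) ≤ liminf_i P(E_i,U)`. -/
theorem perim_lsc_in_quasiopen
    (μ : Measure X) (hcomp : CompleteSpace X)
    (hdoub : ∃ Cd : ℝ, Doubling μ Cd) (hpoin : ∃ CP lam : ℝ, Poincare μ CP lam)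
    (U : Set X) (hU : QuasiOpen μ U) (E : Set X) (Ei : ℕ → Set X)
    (hE : NullMeasurableSet E μ) (hEi : ∀ i, NullMeasurableSet (Ei i) μ)
    (hfin : perim μ E U < ∞) (hfini : ∀ i, perim μ (Ei i) U < ∞)
    (hconv : L1LocConv μ U (fun i => Set.indicator (Ei i) (fun _ => (1 : ℝ)))
      (Set.indicator E (fun _ => (1 : ℝ)))) :
    perim μ E U ≤ Filter.liminf (fun i => perim μ (Ei i) U) Filter.atTop := by
  exact main_aux μ hcomp hdoub U hU E Ei hE hEi hfin hconv

end PaperBV
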